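/- arXiv:1507.05412 — 2 statements merged into one kernel-verified Lean document; each statement's English description precedes it below -/
import Mathlib

section
/- There exists a constant C > 0 depending only on n such that ‖f‖_{C²} ≤ C ‖f + (n−1)^{-1} Δ_S f‖_{C⁰} for every SO(n−1) invariant function f ∈ C²(S^{n-1}) whose spherical harmonic projection of degree 1 vanishes (π₁ f = 0). -/
open scoped RealInnerProductSpace
open MeasureTheory

noncomputable section

abbrev Eucl (n : ℕ) := EuclideanSpace ℝ (Fin n)

/-- The degree-zero homogeneous extension of a function on the unit sphere. -/
def sphereExt {n : ℕ} (f : Eucl n → ℝ) : Eucl n → ℝ := fun x => f (‖x‖⁻¹ • x)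

/-- The Laplace–Beltrami operator on the unit sphere `S^{n-1}`. -/
def sLap (n : ℕ) (f : Eucl n → ℝ) (u : Eucl n) : ℝ :=
  ∑ i : Fin n, iteratedFDeriv ℝ 2 (sphereExt f) u (fun _ => EuclideanSpace.single i 1)

/-- Squared norm of the Riemannian gradient on the unit sphere. -/
def sGradNormSq (n : ℕ) (f : Eucl n → ℝ) (u : Eucl n) : ℝ := ‖gradient (sphereExt f) u‖ ^ 2

/-- Orthogonal projection of `v` onto the tangent space of the unit sphere at `u`. -/
def tanProj {n : ℕ} (u v : Eucl n) : Eucl n := v - ⟪v, u⟫ • u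

/-- Squared tensor norm of the covariant Hessian on the round unit sphere. -/
def sHessNormSq (n : ℕ) (f : Eucl n → ℝ) (u : Eucl n) : ℝ :=
  ∑ i : Fin n, ∑ j : Fin n,
    (iteratedFDeriv ℝ 2 (sphereExt f) u
      ![tanProj u (EuclideanSpace.single i 1), tanProj u (EuclideanSpace.single j 1)]) ^ 2

/-- The `C²` norm `‖f‖_{C²} = max|f| + max|∇f| + max|∇²f|` on the unit sphere. -/
def C2norm (n : ℕ) (f : Eucl n → ℝ) : ℝ :=
  (⨆ u : Metric.sphere (0 : Eucl n) 1, |f u|)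
    + (⨆ u : Metric.sphere (0 : Eucl n) 1, Real.sqrt (sGradNormSq n f u))
    + ⨆ u : Metric.sphere (0 : Eucl n) 1, Real.sqrt (sHessNormSq n f u)

/-! In the height variable `t = ⟪u, e⟫`, with `k = n - 1`, a zonal function `F ⟪u, e⟫` satisfies
`□ F = H + k⁻¹ (1 - t²) F''`, where `H = F - t F'` has derivative `-t F''`. At an interior maximum
of `H` we have `F'' ≥ 0`, and at `t = ±1` the second-order term vanishes, so the maximum principle
gives `|H| ≤ M := sup |□ F|`, and hence `(1 - t²) |F''| ≤ 2 k M`. This controls `F' - F' 0` for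
`|t| ≤ 1/2`; for `|t| ≥ 1/2` one integrates `(F / t)' = -H / t²` instead. It remains to bound
`F' 0`, the coefficient of the kernel element `t` of `□`. By rotation invariance the mean of
`⟪u, e⟫²` over the sphere is `1 / n`, so orthogonality of `F ⟪u, e⟫` to `⟪u, e⟫` bounds `F' 0`
by `n` times the sup norm of `F - F' 0 · t`. -/

open Set Filter Topology Module Metric

section OneVariable

/-- The value at `0` of the tangent line to the graph of `F` at `t`. It is the quantity that obeys a
maximum principle for `f ↦ f + k⁻¹ Δ_S f`. -/
def tangentIntercept (F : ℝ → ℝ) (t : ℝ) : ℝ := F t - t * deriv F t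

/-- The operator `f ↦ f + k⁻¹ Δ_S f` on `S^k`, for zonal functions `f u = F ⟪u, e⟫`, written in the
height variable `t = ⟪u, e⟫`. -/
def zonalBox (k : ℝ) (F : ℝ → ℝ) (t : ℝ) : ℝ :=
  F t + 1 / k * ((1 - t ^ 2) * deriv (deriv F) t - k * t * deriv F t)

variable {F : ℝ → ℝ} {k M : ℝ}

lemma zonalBox_eq_tangentIntercept_add (hk : k ≠ 0) (F : ℝ → ℝ) (t : ℝ) :
    zonalBox k F t = tangentIntercept F t + (1 - t ^ 2) * deriv (deriv F) t / k := by
  simp only [zonalBox, tangentIntercept]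
  field_simp
  ring

lemma tangentIntercept_neg (F : ℝ → ℝ) (t : ℝ) :
    tangentIntercept (-F) t = -tangentIntercept F t := by
  simp only [tangentIntercept, deriv.neg, Pi.neg_apply]
  ring

lemma zonalBox_neg (k : ℝ) (F : ℝ → ℝ) (t : ℝ) : zonalBox k (-F) t = -zonalBox k F t := by
  simp only [zonalBox, deriv.neg', deriv.fun_neg', Pi.neg_apply]
  ring

lemma contDiff_one_deriv_of_contDiff_two (hF : ContDiff ℝ 2 F) : ContDiff ℝ 1 (deriv F) :=
  ContDiff.deriv' (by simpa only [one_add_one_eq_two] using hF)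

lemma continuous_zonalBox (hF : ContDiff ℝ 2 F) (k : ℝ) : Continuous (zonalBox k F) := by
  have hF' := contDiff_one_deriv_of_contDiff_two hF
  have := hF.continuous
  have := hF'.continuous
  have := hF'.continuous_deriv_one
  unfold zonalBox
  fun_prop

lemma hasDerivAt_deriv_of_contDiff_two (hF : ContDiff ℝ 2 F) (t : ℝ) :
    HasDerivAt (deriv F) (deriv (deriv F) t) t :=
  ((contDiff_one_deriv_of_contDiff_two hF).differentiable one_ne_zero t).hasDerivAt

lemma hasDerivAt_tangentIntercept (hF : ContDiff ℝ 2 F) (t : ℝ) :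
    HasDerivAt (tangentIntercept F) (-(t * deriv (deriv F) t)) t := by
  have h := (hF.differentiable two_ne_zero t).hasDerivAt.sub
    ((hasDerivAt_id t).mul (hasDerivAt_deriv_of_contDiff_two hF t))
  refine h.congr_deriv ?_
  simp only [id_eq]
  ring

lemma continuous_tangentIntercept (hF : ContDiff ℝ 2 F) : Continuous (tangentIntercept F) :=
  continuous_iff_continuousAt.2 fun t ↦ (hasDerivAt_tangentIntercept hF t).continuousAt

lemma deriv_deriv_nonneg_of_isLocalMax_tangentIntercept (hF : ContDiff ℝ 2 F) {s : ℝ}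
    (hs : IsLocalMax (tangentIntercept F) s) : 0 ≤ deriv (deriv F) s := by
  rcases eq_or_ne s 0 with rfl | hs0
  · have hF'' : Continuous (deriv (deriv F)) :=
      (contDiff_one_deriv_of_contDiff_two hF).continuous_deriv_one
    by_contra! hneg
    obtain ⟨δ, hδ, hball⟩ := Metric.eventually_nhds_iff.1
      (hs.and (hF''.continuousAt.eventually_lt continuousAt_const hneg))
    have hδball : ∀ x ∈ Ioc 0 (δ / 2), dist x 0 < δ := fun x hx ↦ by
      rw [dist_zero_right, Real.norm_of_nonneg hx.1.le]
      linarith [hx.2]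
    obtain ⟨ξ, hξ, hslope⟩ := exists_hasDerivAt_eq_slope (tangentIntercept F) _ (half_pos hδ)
      (continuous_tangentIntercept hF).continuousOn fun x _ ↦ hasDerivAt_tangentIntercept hF x
    have hξneg := (hball (hδball ξ ⟨hξ.1, hξ.2.le⟩)).2
    have hmax := (hball (hδball (δ / 2) ⟨half_pos hδ, le_rfl⟩)).1
    have hslope_nonpos : -(ξ * deriv (deriv F) ξ) ≤ 0 :=
      hslope ▸ div_nonpos_of_nonpos_of_nonneg (sub_nonpos.2 hmax) (by linarith)
    linarith [mul_neg_of_pos_of_neg hξ.1 hξneg]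
  · have hcrit := neg_eq_zero.1 (hs.hasDerivAt_eq_zero (hasDerivAt_tangentIntercept hF s))
    exact ((mul_eq_zero.1 hcrit).resolve_left hs0).ge

lemma tangentIntercept_le_of_zonalBox_le (hk : 0 < k) (hF : ContDiff ℝ 2 F)
    (hbox : ∀ t ∈ Icc (-1 : ℝ) 1, zonalBox k F t ≤ M) {t : ℝ} (ht : t ∈ Icc (-1 : ℝ) 1) :
    tangentIntercept F t ≤ M := by
  obtain ⟨s, hs, hmax⟩ := isCompact_Icc.exists_isMaxOn ⟨t, ht⟩
    (continuous_tangentIntercept hF).continuousOn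
  have hdiffusion : 0 ≤ (1 - s ^ 2) * deriv (deriv F) s := by
    by_cases hinterior : s ∈ Ioo (-1 : ℝ) 1
    · have hlocal := hmax.isLocalMax (Icc_mem_nhds hinterior.1 hinterior.2)
      exact mul_nonneg (by nlinarith [hs.1, hs.2])
        (deriv_deriv_nonneg_of_isLocalMax_tangentIntercept hF hlocal)
    · have hboundary : s = -1 ∨ s = 1 := by
        rw [mem_Ioo, not_and_or, not_lt, not_lt] at hinterior
        exact hinterior.imp (le_antisymm · hs.1) (le_antisymm hs.2)
      rcases hboundary with rfl | rfl <;> norm_num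
  calc tangentIntercept F t ≤ tangentIntercept F s := hmax ht
    _ ≤ tangentIntercept F s + (1 - s ^ 2) * deriv (deriv F) s / k :=
      le_add_of_nonneg_right (div_nonneg hdiffusion hk.le)
    _ = zonalBox k F s := (zonalBox_eq_tangentIntercept_add hk.ne' F s).symm
    _ ≤ M := hbox s hs

lemma abs_tangentIntercept_le_of_abs_zonalBox_le (hk : 0 < k) (hF : ContDiff ℝ 2 F)
    (hbox : ∀ t ∈ Icc (-1 : ℝ) 1, |zonalBox k F t| ≤ M) {t : ℝ} (ht : t ∈ Icc (-1 : ℝ) 1) :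
    |tangentIntercept F t| ≤ M := by
  refine abs_le'.2 ⟨tangentIntercept_le_of_zonalBox_le hk hF
    (fun s hs ↦ (abs_le'.1 (hbox s hs)).1) ht, ?_⟩
  rw [← tangentIntercept_neg]
  exact tangentIntercept_le_of_zonalBox_le hk hF.neg
    (fun s hs ↦ (zonalBox_neg k F s).trans_le (abs_le'.1 (hbox s hs)).2) ht

lemma one_sub_sq_mul_abs_deriv_deriv_le (hk : 0 < k) (hF : ContDiff ℝ 2 F)
    (hbox : ∀ t ∈ Icc (-1 : ℝ) 1, |zonalBox k F t| ≤ M) {t : ℝ} (ht : t ∈ Icc (-1 : ℝ) 1) :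
    (1 - t ^ 2) * |deriv (deriv F) t| ≤ 2 * k * M := by
  have hweight : 0 ≤ 1 - t ^ 2 := by nlinarith [ht.1, ht.2]
  calc (1 - t ^ 2) * |deriv (deriv F) t|
      = k * |zonalBox k F t - tangentIntercept F t| := by
        rw [zonalBox_eq_tangentIntercept_add hk.ne', add_sub_cancel_left, abs_div, abs_mul,
          abs_of_nonneg hweight, abs_of_pos hk, mul_div_cancel₀ _ hk.ne']
    _ ≤ k * (M + M) := by
        gcongr
        exact (abs_sub _ _).trans (add_le_add (hbox t ht)
          (abs_tangentIntercept_le_of_abs_zonalBox_le hk hF hbox ht))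
    _ = 2 * k * M := by ring

-- The derivative of `F x / x` is `-tangentIntercept F x / x ^ 2`.
lemma abs_div_sub_div_le_of_abs_tangentIntercept_le {s : Set ℝ}
    (hF : ∀ x ∈ s, DifferentiableAt ℝ F x) (hs : Convex ℝ s) {δ : ℝ} (hδ : 0 < δ)
    (hsδ : ∀ x ∈ s, δ ≤ |x|)
    (hM : ∀ x ∈ s, |tangentIntercept F x| ≤ M) {a b : ℝ} (ha : a ∈ s) (hb : b ∈ s) :
    |F b / b - F a / a| ≤ M / δ ^ 2 * |b - a| := by
  refine hs.norm_image_sub_le_of_norm_hasDerivWithin_le (f := fun x ↦ F x / x)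
    (f' := fun x ↦ (deriv F x * x - F x * 1) / x ^ 2) (fun x hx ↦ ?_) (fun x hx ↦ ?_) ha hb
  · exact ((hF x hx).hasDerivAt.div (hasDerivAt_id x)
      (abs_pos.1 (hδ.trans_le (hsδ x hx)))).hasDerivWithinAt
  · have hnumerator : |deriv F x * x - F x * 1| = |tangentIntercept F x| := by
      rw [tangentIntercept, abs_sub_comm, mul_one, mul_comm]
    rw [Real.norm_eq_abs, abs_div, hnumerator, abs_pow]
    exact div_le_div₀ ((abs_nonneg _).trans (hM x hx)) (hM x hx) (by positivity)
      (pow_le_pow_left₀ hδ.le (hsδ x hx) 2)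

lemma abs_deriv_sub_deriv_le_of_abs_tangentIntercept_le {s : Set ℝ}
    (hF : ∀ x ∈ s, DifferentiableAt ℝ F x) (hs : Convex ℝ s) {δ : ℝ} (hδ : 0 < δ)
    (hsδ : ∀ x ∈ s, δ ≤ |x|)
    (hM : ∀ x ∈ s, |tangentIntercept F x| ≤ M) {a b : ℝ} (ha : a ∈ s) (hb : b ∈ s) :
    |deriv F b - deriv F a| ≤ M / δ ^ 2 * |b - a| + 2 * (M / δ) := by
  have hderiv : ∀ x ∈ s, deriv F x = F x / x - tangentIntercept F x / x := fun x hx ↦ by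
    have : x ≠ 0 := abs_pos.1 (hδ.trans_le (hsδ x hx))
    rw [tangentIntercept]
    field_simp
    ring
  have hquot : ∀ x ∈ s, |tangentIntercept F x / x| ≤ M / δ := fun x hx ↦ by
    rw [abs_div]
    exact div_le_div₀ ((abs_nonneg _).trans (hM x hx)) (hM x hx) hδ (hsδ x hx)
  calc |deriv F b - deriv F a|
      = |(F b / b - F a / a) - (tangentIntercept F b / b - tangentIntercept F a / a)| := by
        rw [hderiv a ha, hderiv b hb]
        congr 1
        ring
    _ ≤ |F b / b - F a / a| + (|tangentIntercept F b / b| + |tangentIntercept F a / a|) :=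
        (abs_sub _ _).trans (by gcongr; exact abs_sub _ _)
    _ ≤ M / δ ^ 2 * |b - a| + (M / δ + M / δ) := by
        gcongr
        exacts [abs_div_sub_div_le_of_abs_tangentIntercept_le hF hs hδ hsδ hM ha hb,
          hquot b hb, hquot a ha]
    _ = M / δ ^ 2 * |b - a| + 2 * (M / δ) := by ring

lemma abs_deriv_sub_deriv_zero_le_of_abs_le_half (hk : 0 < k) (hF : ContDiff ℝ 2 F)
    (hbox : ∀ t ∈ Icc (-1 : ℝ) 1, |zonalBox k F t| ≤ M) {t : ℝ} (ht : |t| ≤ 1 / 2) :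
    |deriv F t - deriv F 0| ≤ 2 * k * M := by
  have hM : 0 ≤ M := (abs_nonneg _).trans (hbox 0 (by norm_num))
  have hsecond : ∀ x ∈ Icc (-(1 / 2) : ℝ) (1 / 2), ‖deriv (deriv F) x‖ ≤ 4 * k * M := by
    intro x hx
    have hweighted := one_sub_sq_mul_abs_deriv_deriv_le hk hF hbox
      (t := x) ⟨by linarith [hx.1], by linarith [hx.2]⟩
    have hweight : 1 / 2 ≤ 1 - x ^ 2 := by nlinarith [hx.1, hx.2]
    rw [Real.norm_eq_abs]
    nlinarith [abs_nonneg (deriv (deriv F) x)]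
  calc |deriv F t - deriv F 0| ≤ 4 * k * M * |t - 0| :=
        (convex_Icc _ _).norm_image_sub_le_of_norm_hasDerivWithin_le
          (fun x _ ↦ (hasDerivAt_deriv_of_contDiff_two hF x).hasDerivWithinAt) hsecond
          (by norm_num) (abs_le.1 ht)
    _ ≤ 4 * k * M * (1 / 2) := by
        rw [sub_zero]
        gcongr
    _ = 2 * k * M := by ring

lemma abs_deriv_sub_deriv_le_of_half_le_abs (hk : 0 < k) (hF : ContDiff ℝ 2 F)
    (hbox : ∀ t ∈ Icc (-1 : ℝ) 1, |zonalBox k F t| ≤ M) {s : Set ℝ} (hs : Convex ℝ s)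
    (hsub : s ⊆ Icc (-1) 1) (hhalf : ∀ x ∈ s, 1 / 2 ≤ |x|) {a b : ℝ} (ha : a ∈ s) (hb : b ∈ s) :
    |deriv F b - deriv F a| ≤ 12 * M := by
  have hM : 0 ≤ M := (abs_nonneg _).trans (hbox 0 (by norm_num))
  have hdist : |b - a| ≤ 2 :=
    abs_le.2 ⟨by linarith [(hsub ha).2, (hsub hb).1], by linarith [(hsub ha).1, (hsub hb).2]⟩
  calc |deriv F b - deriv F a| ≤ M / (1 / 2) ^ 2 * |b - a| + 2 * (M / (1 / 2)) :=
        abs_deriv_sub_deriv_le_of_abs_tangentIntercept_le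
          (fun x _ ↦ hF.differentiable two_ne_zero x) hs one_half_pos hhalf
          (fun x hx ↦ abs_tangentIntercept_le_of_abs_zonalBox_le hk hF hbox (hsub hx)) ha hb
    _ ≤ M / (1 / 2) ^ 2 * 2 + 2 * (M / (1 / 2)) := by gcongr
    _ = 12 * M := by ring

lemma abs_deriv_sub_deriv_zero_le (hk : 0 < k) (hF : ContDiff ℝ 2 F)
    (hbox : ∀ t ∈ Icc (-1 : ℝ) 1, |zonalBox k F t| ≤ M) {t : ℝ} (ht : t ∈ Icc (-1 : ℝ) 1) :
    |deriv F t - deriv F 0| ≤ (2 * k + 12) * M := by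
  have hM : 0 ≤ M := (abs_nonneg _).trans (hbox 0 (by norm_num))
  obtain ⟨a, ha, hta⟩ : ∃ a : ℝ, |a| ≤ 1 / 2 ∧ |deriv F t - deriv F a| ≤ 12 * M := by
    rcases le_total |t| (1 / 2) with hsmall | hlarge
    · exact ⟨t, hsmall, by simpa using hM⟩
    rcases le_abs'.1 hlarge with hneg | hpos
    · refine ⟨-(1 / 2), by norm_num [abs_of_pos], ?_⟩
      exact abs_deriv_sub_deriv_le_of_half_le_abs hk hF hbox (convex_Icc (-1) (-(1 / 2)))
        (Icc_subset_Icc_right (by norm_num)) (fun x hx ↦ le_abs'.2 (.inl hx.2))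
        (by norm_num) ⟨ht.1, hneg⟩
    · refine ⟨1 / 2, by norm_num [abs_of_pos], ?_⟩
      exact abs_deriv_sub_deriv_le_of_half_le_abs hk hF hbox (convex_Icc (1 / 2) 1)
        (Icc_subset_Icc_left (by norm_num)) (fun x hx ↦ le_abs'.2 (.inr hx.1))
        (by norm_num) ⟨hpos, ht.2⟩
  calc |deriv F t - deriv F 0| ≤ |deriv F t - deriv F a| + |deriv F a - deriv F 0| :=
        abs_sub_le _ _ _
    _ ≤ 12 * M + 2 * k * M :=
        add_le_add hta (abs_deriv_sub_deriv_zero_le_of_abs_le_half hk hF hbox ha)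
    _ = (2 * k + 12) * M := by ring

lemma abs_sub_mul_deriv_zero_le (hk : 0 < k) (hF : ContDiff ℝ 2 F)
    (hbox : ∀ t ∈ Icc (-1 : ℝ) 1, |zonalBox k F t| ≤ M) {t : ℝ} (ht : t ∈ Icc (-1 : ℝ) 1) :
    |F t - deriv F 0 * t| ≤ (2 * k + 13) * M := by
  calc |F t - deriv F 0 * t|
      = |tangentIntercept F t + t * (deriv F t - deriv F 0)| := by
        rw [tangentIntercept]
        congr 1
        ring
    _ ≤ |tangentIntercept F t| + |t| * |deriv F t - deriv F 0| := by
        rw [← abs_mul]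
        exact abs_add_le _ _
    _ ≤ M + 1 * ((2 * k + 12) * M) := by
        gcongr
        exacts [abs_tangentIntercept_le_of_abs_zonalBox_le hk hF hbox ht, abs_le.2 ht,
          abs_deriv_sub_deriv_zero_le hk hF hbox ht]
    _ = (2 * k + 13) * M := by ring

end OneVariable

section NormalizedInner

variable {E : Type*} [NormedAddCommGroup E] [InnerProductSpace ℝ E]

/-- The degree-zero homogeneous extension of the height function `u ↦ ⟪u, e⟫` on the unit sphere.
It is the cosine of the angle between `x` and `e` when `‖e‖ = 1`, and `0` at `x = 0`. -/
def normalizedInner (e x : E) : ℝ := ‖x‖⁻¹ * ⟪x, e⟫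

lemma hasFDerivAt_inner_const (e x : E) :
    HasFDerivAt (fun y : E ↦ ⟪y, e⟫) (innerSL ℝ e) x := by
  simp_rw [real_inner_comm]
  exact (innerSL ℝ e).hasFDerivAt

lemma hasFDerivAt_inv_norm {x : E} (hx : x ≠ 0) :
    HasFDerivAt (fun y : E ↦ ‖y‖⁻¹) (-(‖x‖⁻¹ ^ 3) • innerSL ℝ x) x := by
  have hnorm : HasFDerivAt (fun y : E ↦ ‖y‖) (‖x‖⁻¹ • innerSL ℝ x) x := by
    have hsqrt := (hasStrictFDerivAt_norm_sq x).hasFDerivAt.sqrt (by positivity)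
    simp only [Real.sqrt_sq (norm_nonneg _)] at hsqrt
    refine hsqrt.congr_fderiv ?_
    rw [← Nat.cast_smul_eq_nsmul ℝ, smul_smul]
    congr 1
    field_simp
    norm_num
  refine ((hasDerivAt_inv (norm_ne_zero_iff.2 hx)).comp_hasFDerivAt x hnorm).congr_fderiv ?_
  rw [smul_smul]
  congr 1
  field_simp

lemma hasFDerivAt_normalizedInner (e : E) {x : E} (hx : x ≠ 0) :
    HasFDerivAt (normalizedInner e)
      (‖x‖⁻¹ • innerSL ℝ e - (‖x‖⁻¹ ^ 3 * ⟪x, e⟫) • innerSL ℝ x) x := by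
  refine ((hasFDerivAt_inv_norm hx).mul (hasFDerivAt_inner_const e x)).congr_fderiv ?_
  module

lemma contDiffAt_normalizedInner (e : E) {x : E} (hx : x ≠ 0) {m : WithTop ℕ∞} :
    ContDiffAt ℝ m (normalizedInner e) x :=
  ((contDiffAt_norm ℝ hx).inv (norm_ne_zero_iff.2 hx)).mul (contDiffAt_id.inner ℝ contDiffAt_const)

variable {u : E}

lemma normalizedInner_of_norm_eq_one (e : E) (hu : ‖u‖ = 1) : normalizedInner e u = ⟪u, e⟫ := by
  simp [normalizedInner, hu]

lemma fderiv_normalizedInner_of_norm_eq_one (e : E) (hu : ‖u‖ = 1) :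
    fderiv ℝ (normalizedInner e) u = innerSL ℝ (e - ⟪e, u⟫ • u) := by
  have hu0 : u ≠ 0 := ne_zero_of_norm_ne_zero (by simp [hu])
  rw [(hasFDerivAt_normalizedInner e hu0).fderiv, hu, map_sub, map_smul, real_inner_comm]
  simp

lemma iteratedFDeriv_two_normalizedInner_of_norm_eq_one (e : E) (hu : ‖u‖ = 1) (m : Fin 2 → E) :
    iteratedFDeriv ℝ 2 (normalizedInner e) u m =
      3 * ⟪u, e⟫ * ⟪m 0, u⟫ * ⟪m 1, u⟫ - ⟪u, e⟫ * ⟪m 0, m 1⟫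
        - ⟪m 0, u⟫ * ⟪m 1, e⟫ - ⟪m 1, u⟫ * ⟪m 0, e⟫ := by
  have hu0 : u ≠ 0 := ne_zero_of_norm_ne_zero (by simp [hu])
  have hfderiv : fderiv ℝ (normalizedInner e) =ᶠ[𝓝 u] fun x ↦
      ‖x‖⁻¹ • innerSL ℝ e - (‖x‖⁻¹ ^ 3 * ⟪x, e⟫) • innerSL ℝ x := by
    filter_upwards [isOpen_ne.mem_nhds hu0] with x hx
    exact (hasFDerivAt_normalizedInner e hx).fderiv
  have hinv := hasFDerivAt_inv_norm hu0
  have hsecond := (hinv.smul_const (innerSL ℝ e)).sub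
    (((hinv.pow 3).mul (hasFDerivAt_inner_const e u)).smul
      (innerSL ℝ : E →L[ℝ] E →L[ℝ] ℝ).hasFDerivAt)
  have hinnerSL_apply : ∀ v w : E, (innerSL ℝ : E →L[ℝ] E →L[ℝ] ℝ) v w = ⟪v, w⟫ := fun _ _ ↦ rfl
  rw [iteratedFDeriv_two_apply, (hsecond.congr_of_eventuallyEq hfderiv).fderiv]
  simp only [hu, hinnerSL_apply, real_inner_comm, inv_one, one_pow, neg_smul, one_smul, smul_neg,
    inv_pow, Pi.mul_apply, one_mul, mul_one, Nat.add_one_sub_one, nsmul_eq_mul, Nat.cast_ofNat,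
    smul_eq_mul, sub_apply, neg_apply, add_apply, smul_apply, ContinuousLinearMap.smulRight_apply]
  ring

end NormalizedInner

lemma iteratedFDeriv_two_comp_apply {E : Type*} [NormedAddCommGroup E] [NormedSpace ℝ E]
    {F : ℝ → ℝ} {φ : E → ℝ} {x : E} (hF : ContDiff ℝ 2 F) (hφ : ContDiffAt ℝ 2 φ x)
    (m : Fin 2 → E) :
    iteratedFDeriv ℝ 2 (F ∘ φ) x m =
      deriv (deriv F) (φ x) * fderiv ℝ φ x (m 0) * fderiv ℝ φ x (m 1)
        + deriv F (φ x) * iteratedFDeriv ℝ 2 φ x m := by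
  have hfderiv : fderiv ℝ (F ∘ φ) =ᶠ[𝓝 x] fun y ↦ deriv F (φ y) • fderiv ℝ φ y := by
    filter_upwards [hφ.eventually (by simp)] with y hy
    exact ((hF.differentiable two_ne_zero (φ y)).hasDerivAt.comp_hasFDerivAt y
      (hy.differentiableAt two_ne_zero).hasFDerivAt).fderiv
  have hφ' : HasFDerivAt φ (fderiv ℝ φ x) x := (hφ.differentiableAt two_ne_zero).hasFDerivAt
  have hφ'' : HasFDerivAt (fderiv ℝ φ) (fderiv ℝ (fderiv ℝ φ) x) x :=
    ((hφ.fderiv_right (m := 1) (by norm_num)).differentiableAt one_ne_zero).hasFDerivAt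
  have hsecond := ((hasDerivAt_deriv_of_contDiff_two hF (φ x)).comp_hasFDerivAt x hφ').smul hφ''
  rw [iteratedFDeriv_two_apply, iteratedFDeriv_two_apply,
    (hsecond.congr_of_eventuallyEq hfderiv).fderiv]
  simp only [Function.comp_apply, add_apply, smul_apply, ContinuousLinearMap.smulRight_apply,
    smul_eq_mul]
  ring

section TangentialProjection

variable {n : ℕ} {u : Eucl n}

lemma inner_tanProj_self (hu : ‖u‖ = 1) (v : Eucl n) : ⟪tanProj u v, u⟫ = 0 := by
  simp [tanProj, inner_sub_left, real_inner_smul_left, hu]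

lemma norm_tanProj_sq (hu : ‖u‖ = 1) (v : Eucl n) : ‖tanProj u v‖ ^ 2 = ‖v‖ ^ 2 - ⟪u, v⟫ ^ 2 := by
  rw [tanProj, norm_sub_sq_real, real_inner_smul_right, norm_smul, hu, mul_one, Real.norm_eq_abs,
    sq_abs, real_inner_comm]
  ring

lemma norm_tanProj_le (hu : ‖u‖ = 1) (v : Eucl n) : ‖tanProj u v‖ ≤ ‖v‖ :=
  le_of_sq_le_sq (by rw [norm_tanProj_sq hu]; linarith [sq_nonneg ⟪u, v⟫]) (norm_nonneg v)

end TangentialProjection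

section ZonalFunctions

variable {n : ℕ} {u e : Eucl n} {F : ℝ → ℝ}

lemma sphereExt_zonal (e : Eucl n) (F : ℝ → ℝ) :
    sphereExt (fun x ↦ F ⟪x, e⟫) = F ∘ normalizedInner e := by
  ext x
  simp only [sphereExt, normalizedInner, Function.comp_apply, real_inner_smul_left]

lemma gradient_sphereExt_zonal (hF : DifferentiableAt ℝ F ⟪u, e⟫) (hu : ‖u‖ = 1) :
    gradient (sphereExt fun x ↦ F ⟪x, e⟫) u = deriv F ⟪u, e⟫ • tanProj u e := by
  have hu0 : u ≠ 0 := ne_zero_of_norm_ne_zero (by simp [hu])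
  rw [← normalizedInner_of_norm_eq_one e hu] at hF ⊢
  have hφ := (hasFDerivAt_normalizedInner e hu0).differentiableAt.hasFDerivAt
  rw [sphereExt_zonal, gradient, (hF.hasDerivAt.comp_hasFDerivAt u hφ).fderiv,
    fderiv_normalizedInner_of_norm_eq_one e hu, ← map_smul, tanProj]
  exact (InnerProductSpace.toDual ℝ (Eucl n)).symm_apply_apply _

lemma iteratedFDeriv_two_sphereExt_zonal (hF : ContDiff ℝ 2 F) (e : Eucl n) (hu : ‖u‖ = 1)
    (m : Fin 2 → Eucl n) :
    iteratedFDeriv ℝ 2 (sphereExt fun x ↦ F ⟪x, e⟫) u m =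
      deriv (deriv F) ⟪u, e⟫ * ⟪tanProj u e, m 0⟫ * ⟪tanProj u e, m 1⟫
        + deriv F ⟪u, e⟫ * (3 * ⟪u, e⟫ * ⟪m 0, u⟫ * ⟪m 1, u⟫ - ⟪u, e⟫ * ⟪m 0, m 1⟫
          - ⟪m 0, u⟫ * ⟪m 1, e⟫ - ⟪m 1, u⟫ * ⟪m 0, e⟫) := by
  have hu0 : u ≠ 0 := ne_zero_of_norm_ne_zero (by simp [hu])
  rw [sphereExt_zonal, iteratedFDeriv_two_comp_apply hF (contDiffAt_normalizedInner e hu0),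
    fderiv_normalizedInner_of_norm_eq_one e hu,
    iteratedFDeriv_two_normalizedInner_of_norm_eq_one e hu, normalizedInner_of_norm_eq_one e hu]
  rfl

lemma sum_inner_single_mul_inner_single (a b : Eucl n) :
    ∑ i, ⟪EuclideanSpace.single i (1 : ℝ), a⟫ * ⟪EuclideanSpace.single i (1 : ℝ), b⟫ = ⟪a, b⟫ := by
  simpa [real_inner_comm] using (EuclideanSpace.basisFun (Fin n) ℝ).sum_inner_mul_inner a b

lemma sLap_zonal (hF : ContDiff ℝ 2 F) (he : ‖e‖ = 1) (hu : ‖u‖ = 1) :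
    sLap n (fun x ↦ F ⟪x, e⟫) u =
      (1 - ⟪u, e⟫ ^ 2) * deriv (deriv F) ⟪u, e⟫ - ((n : ℝ) - 1) * ⟪u, e⟫ * deriv F ⟪u, e⟫ := by
  set t := ⟪u, e⟫
  let b (i : Fin n) : Eucl n := EuclideanSpace.single i 1
  have hdiag : ∀ i, iteratedFDeriv ℝ 2 (sphereExt fun x ↦ F ⟪x, e⟫) u (fun _ ↦ b i) =
      deriv (deriv F) t * (⟪b i, tanProj u e⟫ * ⟪b i, tanProj u e⟫)
        + deriv F t * (3 * t * (⟪b i, u⟫ * ⟪b i, u⟫) - t - 2 * (⟪b i, u⟫ * ⟪b i, e⟫)) := by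
    intro i
    have hbi : ⟪b i, b i⟫ = 1 := by simp [b]
    rw [iteratedFDeriv_two_sphereExt_zonal hF e hu, hbi, real_inner_comm (b i)]
    ring
  calc sLap n (fun x ↦ F ⟪x, e⟫) u
      = deriv (deriv F) t * ⟪tanProj u e, tanProj u e⟫
        + deriv F t * (3 * t * ⟪u, u⟫ - n * t - 2 * ⟪u, e⟫) := by
        rw [sLap, Finset.sum_congr rfl fun i _ ↦ hdiag i]
        simp only [b, Finset.sum_add_distrib, Finset.sum_sub_distrib, ← Finset.mul_sum,
          sum_inner_single_mul_inner_single, Finset.sum_const, Finset.card_univ, Fintype.card_fin,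
          nsmul_eq_mul]
    _ = (1 - t ^ 2) * deriv (deriv F) t - ((n : ℝ) - 1) * t * deriv F t := by
        rw [real_inner_self_eq_norm_sq, real_inner_self_eq_norm_sq, norm_tanProj_sq hu, he, hu]
        ring

lemma zonal_add_sLap_eq_zonalBox (hF : ContDiff ℝ 2 F) (he : ‖e‖ = 1) (hu : ‖u‖ = 1) :
    F ⟪u, e⟫ + 1 / ((n : ℝ) - 1) * sLap n (fun x ↦ F ⟪x, e⟫) u
      = zonalBox ((n : ℝ) - 1) F ⟪u, e⟫ := by
  rw [sLap_zonal hF he hu, zonalBox]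

lemma sqrt_sGradNormSq_zonal_le (hF : DifferentiableAt ℝ F ⟪u, e⟫) (he : ‖e‖ = 1) (hu : ‖u‖ = 1) :
    √(sGradNormSq n (fun x ↦ F ⟪x, e⟫) u) ≤ |deriv F ⟪u, e⟫| := by
  rw [sGradNormSq, Real.sqrt_sq (norm_nonneg _), gradient_sphereExt_zonal hF hu, norm_smul,
    Real.norm_eq_abs]
  exact mul_le_of_le_one_right (abs_nonneg _) ((norm_tanProj_le hu e).trans_eq he)

lemma iteratedFDeriv_two_sphereExt_zonal_tanProj (hF : ContDiff ℝ 2 F) (e : Eucl n) (hu : ‖u‖ = 1)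
    (v w : Eucl n) :
    iteratedFDeriv ℝ 2 (sphereExt fun x ↦ F ⟪x, e⟫) u ![tanProj u v, tanProj u w] =
      deriv (deriv F) ⟪u, e⟫ * ⟪tanProj u e, tanProj u v⟫ * ⟪tanProj u e, tanProj u w⟫
        - deriv F ⟪u, e⟫ * (⟪u, e⟫ * ⟪tanProj u v, tanProj u w⟫) := by
  rw [iteratedFDeriv_two_sphereExt_zonal hF e hu]
  simp only [Matrix.cons_val_zero, Matrix.cons_val_one, inner_tanProj_self hu]
  ring

lemma abs_iteratedFDeriv_two_sphereExt_zonal_tanProj_le (hF : ContDiff ℝ 2 F) (he : ‖e‖ = 1)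
    (hu : ‖u‖ = 1) {v w : Eucl n} (hv : ‖v‖ ≤ 1) (hw : ‖w‖ ≤ 1) :
    |iteratedFDeriv ℝ 2 (sphereExt fun x ↦ F ⟪x, e⟫) u ![tanProj u v, tanProj u w]| ≤
      (1 - ⟪u, e⟫ ^ 2) * |deriv (deriv F) ⟪u, e⟫| + |deriv F ⟪u, e⟫| := by
  have hPv : ‖tanProj u v‖ ≤ 1 := (norm_tanProj_le hu v).trans hv
  have hPw : ‖tanProj u w‖ ≤ 1 := (norm_tanProj_le hu w).trans hw
  have hinner : ∀ {a b : Eucl n}, ‖b‖ ≤ 1 → |⟪a, b⟫| ≤ ‖a‖ := fun {a b} hb ↦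
    (abs_real_inner_le_norm a b).trans (mul_le_of_le_one_right (norm_nonneg a) hb)
  rw [iteratedFDeriv_two_sphereExt_zonal_tanProj hF e hu]
  calc _ ≤ |deriv (deriv F) ⟪u, e⟫| * |⟪tanProj u e, tanProj u v⟫| * |⟪tanProj u e, tanProj u w⟫|
          + |deriv F ⟪u, e⟫| * (|⟪u, e⟫| * |⟪tanProj u v, tanProj u w⟫|) := by
        simp only [← abs_mul]
        exact abs_sub _ _
    _ ≤ |deriv (deriv F) ⟪u, e⟫| * ‖tanProj u e‖ * ‖tanProj u e‖
          + |deriv F ⟪u, e⟫| * (1 * 1) := by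
        gcongr
        exacts [hinner hPv, hinner hPw, (hinner he.le).trans hu.le, (hinner hPw).trans hPv]
    _ = (1 - ⟪u, e⟫ ^ 2) * |deriv (deriv F) ⟪u, e⟫| + |deriv F ⟪u, e⟫| := by
        rw [mul_assoc, ← sq, norm_tanProj_sq hu, he]
        ring

lemma sqrt_sHessNormSq_le {f : Eucl n → ℝ} {B : ℝ} (hB : 0 ≤ B)
    (hbound : ∀ v w : Eucl n, ‖v‖ ≤ 1 → ‖w‖ ≤ 1 →
      |iteratedFDeriv ℝ 2 (sphereExt f) u ![tanProj u v, tanProj u w]| ≤ B) :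
    √(sHessNormSq n f u) ≤ n * B := by
  refine Real.sqrt_le_iff.2 ⟨by positivity, ?_⟩
  calc sHessNormSq n f u ≤ ∑ _i : Fin n, ∑ _j : Fin n, B ^ 2 :=
        Finset.sum_le_sum fun i _ ↦ Finset.sum_le_sum fun j _ ↦
          sq_le_sq.2 ((hbound _ _ (by simp) (by simp)).trans (le_abs_self B))
    _ = (n * B) ^ 2 := by
        simp only [Finset.sum_const, Finset.card_univ, Fintype.card_fin, nsmul_eq_mul]
        ring

lemma sqrt_sHessNormSq_zonal_le (hF : ContDiff ℝ 2 F) (he : ‖e‖ = 1) (hu : ‖u‖ = 1) :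
    √(sHessNormSq n (fun x ↦ F ⟪x, e⟫) u) ≤
      n * ((1 - ⟪u, e⟫ ^ 2) * |deriv (deriv F) ⟪u, e⟫| + |deriv F ⟪u, e⟫|) := by
  have hbound := fun v w hv hw ↦
    abs_iteratedFDeriv_two_sphereExt_zonal_tanProj_le hF he hu (v := v) (w := w) hv hw
  exact sqrt_sHessNormSq_le ((abs_nonneg _).trans (hbound 0 0 (by simp) (by simp))) hbound

end ZonalFunctions

section SphereMeasure

variable {E : Type*} [NormedAddCommGroup E] [InnerProductSpace ℝ E]

lemma inner_mem_Icc_of_norm_eq_one {x y : E} (hx : ‖x‖ = 1) (hy : ‖y‖ = 1) :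
    ⟪x, y⟫ ∈ Icc (-1 : ℝ) 1 :=
  abs_le.1 (by simpa only [hx, hy, mul_one] using abs_real_inner_le_norm x y)

lemma exists_mem_sphere_inner_eq (hE : 1 < Module.rank ℝ E) {e : E} (he : ‖e‖ = 1) {t : ℝ}
    (ht : t ∈ Icc (-1 : ℝ) 1) : ∃ u ∈ sphere (0 : E) 1, ⟪u, e⟫ = t := by
  have hivt := (isPreconnected_sphere hE (0 : E) 1).intermediate_value
    (a := -e) (b := e) (by simp [he]) (by simp [he])
    (f := fun u ↦ ⟪u, e⟫) (by fun_prop)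
  exact hivt (by simpa [he] using ht)

lemma mem_image_stereoInvFunAux_closedBall {v x : E} (hv : ‖v‖ = 1) (hx : ‖x‖ = 1)
    (hxv : ⟪x, v⟫ ≤ 0) :
    x ∈ (fun w : (ℝ ∙ v)ᗮ ↦ stereoInvFunAux v (w : E)) '' closedBall 0 2 := by
  have hne : x ≠ v := by
    rintro rfl
    norm_num [real_inner_self_eq_norm_sq, hx] at hxv
  have hinv := stereo_left_inv hv (x := ⟨x, mem_sphere_zero_iff_norm.2 hx⟩) hne
  refine ⟨stereoToFun v x, ?_, congrArg Subtype.val hinv⟩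
  have hdenom : 1 ≤ 1 - ⟪v, x⟫ := by linarith [real_inner_comm x v]
  rw [mem_closedBall_zero_iff, stereoToFun_apply, norm_smul, innerSL_apply_apply, Real.norm_eq_abs,
    abs_of_nonneg (by positivity)]
  calc 2 / (1 - ⟪v, x⟫) * ‖(ℝ ∙ v)ᗮ.orthogonalProjectionOnto x‖ ≤ 2 * 1 := by
        gcongr
        · exact div_le_self zero_le_two hdenom
        · exact ((ℝ ∙ v)ᗮ.norm_orthogonalProjectionOnto_apply_le x).trans_eq hx
    _ = 2 := mul_one 2

lemma ball_subset_image_orthogonalProjectionOnto_sphere {v : E} (hv : ‖v‖ = 1) :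
    ball 0 1 ⊆ (ℝ ∙ v)ᗮ.orthogonalProjectionOnto '' sphere (0 : E) 1 := by
  intro y hy
  have hnorm : ‖(y : E)‖ ^ 2 ≤ 1 :=
    pow_le_one₀ (norm_nonneg _) (mem_ball_zero_iff.1 hy).le
  have horth : ⟪(y : E), v⟫ = 0 := Submodule.mem_orthogonal_singleton_iff_inner_left.1 y.2
  refine ⟨y + √(1 - ‖(y : E)‖ ^ 2) • v, ?_, ?_⟩
  · rw [mem_sphere_zero_iff_norm, ← pow_eq_one_iff_of_nonneg (norm_nonneg _) two_ne_zero,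
      norm_add_sq_real, real_inner_smul_right, horth, norm_smul, hv, mul_one, Real.norm_eq_abs,
      sq_abs, Real.sq_sqrt (sub_nonneg.2 hnorm)]
    ring
  · have hproj : (ℝ ∙ v)ᗮ.orthogonalProjectionOnto v = 0 :=
      Submodule.orthogonalProjectionOnto_eq_zero_iff.2
        (Submodule.le_orthogonal_orthogonal _ (Submodule.mem_span_singleton_self v))
    rw [map_add, map_smul, hproj, smul_zero, add_zero,
      Submodule.orthogonalProjectionOnto_mem_subspace_eq_self]

lemma cast_finrank_orthogonal_span_singleton [FiniteDimensional ℝ E] {v : E} (hv : v ≠ 0) :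
    (finrank ℝ (ℝ ∙ v)ᗮ : ℝ) = finrank ℝ E - 1 := by
  have hsum := Submodule.finrank_add_finrank_orthogonal (ℝ ∙ v)
  rw [finrank_span_singleton hv] at hsum
  rw [← hsum]
  push_cast
  ring

variable [MeasurableSpace E] [BorelSpace E]

lemma setIntegral_sphere_comp_linearIsometryEquiv (Φ : E ≃ₗᵢ[ℝ] E) (d : ℝ) (g : E → ℝ) :
    ∫ u in sphere (0 : E) 1, g (Φ u) ∂μH[d] = ∫ u in sphere (0 : E) 1, g u ∂μH[d] := by
  have h := (Φ.toIsometryEquiv.measurePreserving_hausdorffMeasure d).setIntegral_preimage_emb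
    Φ.toHomeomorph.measurableEmbedding g (sphere 0 1)
  have hpre : Φ.toIsometryEquiv ⁻¹' sphere (0 : E) 1 = sphere 0 1 := by
    ext x
    simp
  rwa [hpre] at h

lemma setIntegral_sphere_inner_sq_eq_of_norm_eq {v w : E} (h : ‖v‖ = ‖w‖) (d : ℝ) :
    ∫ u in sphere (0 : E) 1, ⟪u, v⟫ ^ 2 ∂μH[d] = ∫ u in sphere (0 : E) 1, ⟪u, w⟫ ^ 2 ∂μH[d] := by
  have hreflect : ∀ u, ⟪u, v⟫ = ⟪(ℝ ∙ (v - w))ᗮ.reflection u, w⟫ := fun u ↦ by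
    rw [← LinearIsometryEquiv.inner_map_map (ℝ ∙ (v - w))ᗮ.reflection u v,
      Submodule.reflection_sub h]
  simp only [hreflect]
  exact setIntegral_sphere_comp_linearIsometryEquiv _ d fun u ↦ ⟪u, w⟫ ^ 2

variable [FiniteDimensional ℝ E]

lemma hausdorffMeasure_hemisphere_lt_top {v : E} (hv : ‖v‖ = 1) :
    μH[(finrank ℝ E : ℝ) - 1] {x : E | ‖x‖ = 1 ∧ ⟪x, v⟫ ≤ 0} < ⊤ := by
  rw [← cast_finrank_orthogonal_span_singleton (norm_ne_zero_iff.1 (hv ▸ one_ne_zero))]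
  have hsmooth : ContDiff ℝ 1 fun w : (ℝ ∙ v)ᗮ ↦ stereoInvFunAux v (w : E) :=
    contDiff_stereoInvFunAux.comp (ℝ ∙ v)ᗮ.subtypeL.contDiff
  obtain ⟨K, hK⟩ := hsmooth.contDiffOn.exists_lipschitzOnWith one_ne_zero
    (convex_closedBall 0 2) (isCompact_closedBall 0 2)
  have hdim : (0 : ℝ) ≤ finrank ℝ (ℝ ∙ v)ᗮ := Nat.cast_nonneg _
  refine (measure_mono fun x hx ↦ mem_image_stereoInvFunAux_closedBall hv hx.1 hx.2).trans_lt ?_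
  exact (hK.hausdorffMeasure_image_le hdim).trans_lt (ENNReal.mul_lt_top
    (ENNReal.rpow_lt_top_of_nonneg hdim ENNReal.coe_ne_top)
    (isCompact_closedBall _ _).measure_lt_top)

variable (E) in
lemma hausdorffMeasure_sphere_lt_top [Nontrivial E] :
    μH[(finrank ℝ E : ℝ) - 1] (sphere (0 : E) 1) < ⊤ := by
  obtain ⟨v, hv⟩ := exists_norm_eq E zero_le_one
  have hcover : sphere (0 : E) 1 ⊆
      {x | ‖x‖ = 1 ∧ ⟪x, v⟫ ≤ 0} ∪ {x | ‖x‖ = 1 ∧ ⟪x, -v⟫ ≤ 0} := fun x hx ↦ by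
    have hx1 : ‖x‖ = 1 := mem_sphere_zero_iff_norm.1 hx
    refine (le_total ⟪x, v⟫ 0).imp (fun h ↦ ⟨hx1, h⟩) fun h ↦ ⟨hx1, ?_⟩
    simpa only [inner_neg_right, neg_nonpos] using h
  exact measure_lt_top_mono hcover (measure_union_lt_top (hausdorffMeasure_hemisphere_lt_top hv)
    (hausdorffMeasure_hemisphere_lt_top (by rwa [norm_neg])))

variable (E) in
lemma hausdorffMeasure_sphere_pos [Nontrivial E] :
    0 < μH[(finrank ℝ E : ℝ) - 1] (sphere (0 : E) 1) := by
  obtain ⟨v, hv⟩ := exists_norm_eq E zero_le_one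
  rw [← cast_finrank_orthogonal_span_singleton (norm_ne_zero_iff.1 (hv ▸ one_ne_zero))]
  calc 0 < μH[(finrank ℝ (ℝ ∙ v)ᗮ : ℝ)] (ball (0 : (ℝ ∙ v)ᗮ) 1) :=
        isOpen_ball.measure_pos _ ⟨0, mem_ball_self one_pos⟩
    _ ≤ μH[(finrank ℝ (ℝ ∙ v)ᗮ : ℝ)] ((ℝ ∙ v)ᗮ.orthogonalProjectionOnto '' sphere (0 : E) 1) :=
        measure_mono (ball_subset_image_orthogonalProjectionOnto_sphere hv)
    _ ≤ μH[(finrank ℝ (ℝ ∙ v)ᗮ : ℝ)] (sphere (0 : E) 1) :=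
        hausdorffMeasure_orthogonalProjectionOnto_le _ _ _ (Nat.cast_nonneg _)

lemma integrableOn_sphere_of_continuous [Nontrivial E] {g : E → ℝ} (hg : Continuous g) :
    IntegrableOn g (sphere (0 : E) 1) μH[(finrank ℝ E : ℝ) - 1] :=
  hg.continuousOn.integrableOn_of_subset_isCompact (isCompact_sphere 0 1)
    isClosed_sphere.measurableSet subset_rfl (hausdorffMeasure_sphere_lt_top E).ne

lemma finrank_mul_setIntegral_sphere_inner_sq [Nontrivial E] {e : E} (he : ‖e‖ = 1) :
    finrank ℝ E * ∫ u in sphere (0 : E) 1, ⟪u, e⟫ ^ 2 ∂μH[(finrank ℝ E : ℝ) - 1] =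
      μH[(finrank ℝ E : ℝ) - 1].real (sphere (0 : E) 1) := by
  set μ : Measure E := μH[(finrank ℝ E : ℝ) - 1]
  let b := stdOrthonormalBasis ℝ E
  calc finrank ℝ E * ∫ u in sphere (0 : E) 1, ⟪u, e⟫ ^ 2 ∂μ
      = ∑ i, ∫ u in sphere (0 : E) 1, ⟪u, b i⟫ ^ 2 ∂μ := by
        have hrot : ∀ i, ∫ u in sphere (0 : E) 1, ⟪u, b i⟫ ^ 2 ∂μ =
            ∫ u in sphere (0 : E) 1, ⟪u, e⟫ ^ 2 ∂μ := fun i ↦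
          setIntegral_sphere_inner_sq_eq_of_norm_eq ((b.norm_eq_one i).trans he.symm) _
        simp only [hrot, Finset.sum_const, Finset.card_univ, Fintype.card_fin, nsmul_eq_mul]
    _ = ∫ u in sphere (0 : E) 1, ∑ i, ⟪u, b i⟫ ^ 2 ∂μ :=
        (integral_finsetSum _ fun i _ ↦ integrableOn_sphere_of_continuous (by fun_prop)).symm
    _ = ∫ u in sphere (0 : E) 1, 1 ∂μ := by
        refine setIntegral_congr_fun isClosed_sphere.measurableSet fun u hu ↦ ?_
        simp only [b.sum_sq_inner_left, mem_sphere_zero_iff_norm.1 hu, one_pow]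
    _ = μ.real (sphere (0 : E) 1) := by
        rw [setIntegral_const, smul_eq_mul, mul_one]

lemma abs_le_finrank_mul_of_setIntegral_mul_inner_eq_zero [Nontrivial E] {g : E → ℝ}
    (hg : Continuous g) {e : E} (he : ‖e‖ = 1) {A R : ℝ}
    (horth : ∫ u in sphere (0 : E) 1, g u * ⟪e, u⟫ ∂μH[(finrank ℝ E : ℝ) - 1] = 0)
    (hR : ∀ u ∈ sphere (0 : E) 1, |g u - A * ⟪u, e⟫| ≤ R) :
    |A| ≤ finrank ℝ E * R := by
  set μ : Measure E := μH[(finrank ℝ E : ℝ) - 1]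
  set I := ∫ u in sphere (0 : E) 1, ⟪u, e⟫ ^ 2 ∂μ
  have hmoment : finrank ℝ E * I = μ.real (sphere (0 : E) 1) :=
    finrank_mul_setIntegral_sphere_inner_sq he
  have hμpos : 0 < μ.real (sphere (0 : E) 1) :=
    ENNReal.toReal_pos (hausdorffMeasure_sphere_pos E).ne' (hausdorffMeasure_sphere_lt_top E).ne
  have hIpos : 0 < I := pos_of_mul_pos_right (hmoment ▸ hμpos) (Nat.cast_nonneg _)
  have hremainder : ∫ u in sphere (0 : E) 1, (g u - A * ⟪u, e⟫) * ⟪e, u⟫ ∂μ = -(A * I) := by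
    calc ∫ u in sphere (0 : E) 1, (g u - A * ⟪u, e⟫) * ⟪e, u⟫ ∂μ
        = ∫ u in sphere (0 : E) 1, (g u * ⟪e, u⟫ - A * ⟪u, e⟫ ^ 2) ∂μ := by
          congr 1 with u
          rw [real_inner_comm u e]
          ring
      _ = 0 - A * I := by
          rw [integral_sub (integrableOn_sphere_of_continuous (by fun_prop))
            (integrableOn_sphere_of_continuous (by fun_prop)), horth, integral_const_mul]
      _ = -(A * I) := zero_sub _
  have hbound : ∀ u ∈ sphere (0 : E) 1, ‖(g u - A * ⟪u, e⟫) * ⟪e, u⟫‖ ≤ R := fun u hu ↦ by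
    rw [norm_mul]
    exact (mul_le_of_le_one_right (norm_nonneg _) (abs_le.2
      (inner_mem_Icc_of_norm_eq_one he (mem_sphere_zero_iff_norm.1 hu)))).trans (hR u hu)
  have hle : |A| * I ≤ finrank ℝ E * R * I := by
    calc |A| * I = ‖∫ u in sphere (0 : E) 1, (g u - A * ⟪u, e⟫) * ⟪e, u⟫ ∂μ‖ := by
          rw [hremainder, norm_neg, norm_mul, Real.norm_eq_abs, Real.norm_of_nonneg hIpos.le]
      _ ≤ R * μ.real (sphere (0 : E) 1) :=
          norm_setIntegral_le_of_norm_le_const (hausdorffMeasure_sphere_lt_top E) hbound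
      _ = finrank ℝ E * R * I := by
          rw [← hmoment]
          ring
  exact le_of_mul_le_mul_right hle hIpos

end SphereMeasure

section SphereSupremum

variable {E : Type*} [NormedAddCommGroup E] [InnerProductSpace ℝ E] [FiniteDimensional ℝ E]

lemma abs_le_iSup_sphere_abs_inner (hE : 1 < finrank ℝ E) {e : E} (he : ‖e‖ = 1) {G : ℝ → ℝ}
    (hG : Continuous G) {t : ℝ} (ht : t ∈ Icc (-1 : ℝ) 1) :
    |G t| ≤ ⨆ u : sphere (0 : E) 1, |G ⟪(u : E), e⟫| := by
  obtain ⟨u, hu, rfl⟩ := exists_mem_sphere_inner_eq (lt_rank_of_lt_finrank hE) he ht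
  have hcont : Continuous fun u : sphere (0 : E) 1 ↦ |G ⟪(u : E), e⟫| := by fun_prop
  exact le_ciSup (isCompact_range hcont).bddAbove ⟨u, hu⟩

end SphereSupremum

section ZonalEstimate

variable {n : ℕ} {e : Eucl n} {F : ℝ → ℝ} {M : ℝ}

lemma C2norm_le {f : Eucl n → ℝ} {A₀ A₁ A₂ : ℝ} (hA₀ : 0 ≤ A₀) (hA₁ : 0 ≤ A₁) (hA₂ : 0 ≤ A₂)
    (hf : ∀ u : Eucl n, ‖u‖ = 1 → |f u| ≤ A₀)
    (hgrad : ∀ u : Eucl n, ‖u‖ = 1 → √(sGradNormSq n f u) ≤ A₁)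
    (hhess : ∀ u : Eucl n, ‖u‖ = 1 → √(sHessNormSq n f u) ≤ A₂) :
    C2norm n f ≤ A₀ + A₁ + A₂ :=
  add_le_add_three
    (Real.iSup_le (fun u ↦ hf u (mem_sphere_zero_iff_norm.1 u.2)) hA₀)
    (Real.iSup_le (fun u ↦ hgrad u (mem_sphere_zero_iff_norm.1 u.2)) hA₁)
    (Real.iSup_le (fun u ↦ hhess u (mem_sphere_zero_iff_norm.1 u.2)) hA₂)

lemma C2norm_zonal_le (hF : ContDiff ℝ 2 F) (he : ‖e‖ = 1) {A₀ A₁ A₂ : ℝ}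
    (h₀ : ∀ t ∈ Icc (-1 : ℝ) 1, |F t| ≤ A₀) (h₁ : ∀ t ∈ Icc (-1 : ℝ) 1, |deriv F t| ≤ A₁)
    (h₂ : ∀ t ∈ Icc (-1 : ℝ) 1, (1 - t ^ 2) * |deriv (deriv F) t| ≤ A₂) :
    C2norm n (fun x ↦ F ⟪x, e⟫) ≤ A₀ + A₁ + n * (A₂ + A₁) := by
  have hA₀ : 0 ≤ A₀ := (abs_nonneg _).trans (h₀ 0 (by norm_num))
  have hA₁ : 0 ≤ A₁ := (abs_nonneg _).trans (h₁ 0 (by norm_num))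
  have hA₂ : 0 ≤ A₂ := by simpa using h₂ 1 (by norm_num)
  have hmem : ∀ u : Eucl n, ‖u‖ = 1 → ⟪u, e⟫ ∈ Icc (-1 : ℝ) 1 :=
    fun u hu ↦ inner_mem_Icc_of_norm_eq_one hu he
  refine C2norm_le hA₀ hA₁ (by positivity) (fun u hu ↦ h₀ _ (hmem u hu)) (fun u hu ↦ ?_)
    fun u hu ↦ (sqrt_sHessNormSq_zonal_le hF he hu).trans ?_
  · exact (sqrt_sGradNormSq_zonal_le (hF.differentiable two_ne_zero _) he hu).trans
      (h₁ _ (hmem u hu))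
  · gcongr
    exacts [h₂ _ (hmem u hu), h₁ _ (hmem u hu)]

lemma abs_deriv_zero_le_of_setIntegral_eq_zero {k : ℝ} (hk : 0 < k) (hF : ContDiff ℝ 2 F)
    (he : ‖e‖ = 1)
    (horth : ∫ u in sphere (0 : Eucl n) 1, F ⟪u, e⟫ * ⟪e, u⟫ ∂μH[(n : ℝ) - 1] = 0)
    (hbox : ∀ t ∈ Icc (-1 : ℝ) 1, |zonalBox k F t| ≤ M) :
    |deriv F 0| ≤ n * ((2 * k + 13) * M) := by
  have : Nontrivial (Eucl n) := nontrivial_of_ne e 0 (norm_ne_zero_iff.1 (he ▸ one_ne_zero))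
  have hdim : finrank ℝ (Eucl n) = n := finrank_euclideanSpace_fin
  have hremainder : ∀ u ∈ sphere (0 : Eucl n) 1,
      |F ⟪u, e⟫ - deriv F 0 * ⟪u, e⟫| ≤ (2 * k + 13) * M := fun u hu ↦
    abs_sub_mul_deriv_zero_le hk hF hbox
      (inner_mem_Icc_of_norm_eq_one (mem_sphere_zero_iff_norm.1 hu) he)
  have hcont : Continuous fun u : Eucl n ↦ F ⟪u, e⟫ := hF.continuous.comp (by fun_prop)
  simpa only [hdim] using
    abs_le_finrank_mul_of_setIntegral_mul_inner_eq_zero hcont he (by rwa [hdim]) hremainder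

lemma abs_le_and_abs_deriv_le_of_setIntegral_eq_zero {k : ℝ} (hk : 0 < k) (hF : ContDiff ℝ 2 F)
    (he : ‖e‖ = 1)
    (horth : ∫ u in sphere (0 : Eucl n) 1, F ⟪u, e⟫ * ⟪e, u⟫ ∂μH[(n : ℝ) - 1] = 0)
    (hbox : ∀ t ∈ Icc (-1 : ℝ) 1, |zonalBox k F t| ≤ M) {t : ℝ} (ht : t ∈ Icc (-1 : ℝ) 1) :
    |F t| ≤ (n + 1) * (2 * k + 13) * M ∧ |deriv F t| ≤ (n + 1) * (2 * k + 13) * M := by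
  have hM : 0 ≤ M := (abs_nonneg _).trans (hbox 0 (by norm_num))
  have hslope := abs_deriv_zero_le_of_setIntegral_eq_zero hk hF he horth hbox
  constructor
  · calc |F t| = |(F t - deriv F 0 * t) + deriv F 0 * t| := by rw [sub_add_cancel]
      _ ≤ |F t - deriv F 0 * t| + |deriv F 0| * |t| := by
          rw [← abs_mul]
          exact abs_add_le _ _
      _ ≤ (2 * k + 13) * M + n * ((2 * k + 13) * M) * 1 := by
          gcongr
          exacts [abs_sub_mul_deriv_zero_le hk hF hbox ht, abs_le.2 ht]
      _ = (n + 1) * (2 * k + 13) * M := by ring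
  · calc |deriv F t| = |(deriv F t - deriv F 0) + deriv F 0| := by rw [sub_add_cancel]
      _ ≤ |deriv F t - deriv F 0| + |deriv F 0| := abs_add_le _ _
      _ ≤ (2 * k + 12) * M + n * ((2 * k + 13) * M) :=
          add_le_add (abs_deriv_sub_deriv_zero_le hk hF hbox ht) hslope
      _ ≤ (n + 1) * (2 * k + 13) * M := by linarith

end ZonalEstimate

theorem box_C2_estimate_zonal_general (n : ℕ) (hn : 2 ≤ n) :
    ∃ C : ℝ, 0 < C ∧ ∀ e : Eucl n, ‖e‖ = 1 → ∀ F : ℝ → ℝ, ContDiff ℝ 2 F →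
      (∫ u in sphere (0 : Eucl n) 1, F ⟪u, e⟫ * ⟪e, u⟫ ∂μH[(n : ℝ) - 1]) = 0 →
      C2norm n (fun x ↦ F ⟪x, e⟫) ≤
        C * ⨆ u : sphere (0 : Eucl n) 1,
          |F ⟪(u : Eucl n), e⟫ + (1 / ((n : ℝ) - 1)) * sLap n (fun x ↦ F ⟪x, e⟫) u| := by
  set k : ℝ := n - 1
  have hk : 0 < k := sub_pos.2 (by exact_mod_cast hn)
  set L : ℝ := (n + 1) * (2 * k + 13)
  refine ⟨L + L + n * (2 * k + L), by positivity, fun e he F hF horth ↦ ?_⟩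
  have hdim : 1 < finrank ℝ (Eucl n) := by rwa [finrank_euclideanSpace_fin]
  set M := ⨆ u : sphere (0 : Eucl n) 1,
    |F ⟪(u : Eucl n), e⟫ + 1 / k * sLap n (fun x ↦ F ⟪x, e⟫) u|
  have hM : M = ⨆ u : sphere (0 : Eucl n) 1, |zonalBox k F ⟪(u : Eucl n), e⟫| :=
    iSup_congr fun u ↦ by
      rw [zonal_add_sLap_eq_zonalBox hF he (mem_sphere_zero_iff_norm.1 u.2)]
  have hbox : ∀ t ∈ Icc (-1 : ℝ) 1, |zonalBox k F t| ≤ M := fun t ht ↦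
    hM ▸ abs_le_iSup_sphere_abs_inner hdim he (continuous_zonalBox hF k) ht
  have hC1 := fun t ↦ abs_le_and_abs_deriv_le_of_setIntegral_eq_zero hk hF he horth hbox (t := t)
  calc C2norm n (fun x ↦ F ⟪x, e⟫) ≤ L * M + L * M + n * (2 * k * M + L * M) :=
        C2norm_zonal_le hF he (fun t ht ↦ (hC1 t ht).1) (fun t ht ↦ (hC1 t ht).2)
          fun t ↦ one_sub_sq_mul_abs_deriv_deriv_le hk hF hbox
    _ = (L + L + n * (2 * k + L)) * M := by ring

/-- there is a constant `C = C(n) > 0` such that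
`‖f‖_{C²} ≤ C ‖f + (n-1)⁻¹ Δ_S f‖_{C⁰}` for every SO(n-1) invariant (zonal) C²
function `f(u) = F(⟪u,ē⟫)` on `S^{n-1}` with vanishing degree-one spherical
harmonic projection (`π₁ f = 0`). -/
theorem box_C2_estimate_zonal (n : ℕ) (hn : 3 ≤ n) (e : Eucl n) (he : ‖e‖ = 1) :
    ∃ C : ℝ, 0 < C ∧ ∀ F : ℝ → ℝ, ContDiff ℝ 2 F →
      (∀ x : Eucl n,
        (∫ u in Metric.sphere (0 : Eucl n) 1, F ⟪u, e⟫ * ⟪x, u⟫ ∂μH[(n : ℝ) - 1]) = 0) →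
      C2norm n (fun x => F ⟪x, e⟫) ≤
        C * ⨆ u : Metric.sphere (0 : Eucl n) 1,
          |F ⟪(u : Eucl n), e⟫ + (1 / ((n : ℝ) - 1)) * sLap n (fun x => F ⟪x, e⟫) u| := by
  obtain ⟨C, hC, hestimate⟩ := box_C2_estimate_zonal_general n (by omega)
  exact ⟨C, hC, fun F hF horth ↦ hestimate e he F hF (horth e)⟩
end
end

section
/- Let μ be a finite signed zonal Borel measure on S^{n-1}, identified via cylindrical coordinates with a measure on [−1,1], and let σ be a finite signed Borel measure on S^{n-1}. Then for every k ∈ ℕ, the degree-k spherical harmonic component of the convolution σ ∗ μ equals a_k^n[μ] · π_k σ, where a_k^n[μ] = ω_{n−1} ∫_{−1}^{1} P_k^n(t)(1−t²)^{(n−3)/2} dμ(t) and P_k^n is the Legendre polynomial of dimension n and degree k. -/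
open scoped RealInnerProductSpace
open MeasureTheory

noncomputable section

/-- Integral of a function against a finite signed Borel measure, via the Jordan
decomposition. -/
def sint {α : Type*} [MeasurableSpace α] (s : SignedMeasure α) (f : α → ℝ) : ℝ :=
  (∫ x, f x ∂s.toJordanDecomposition.posPart) - ∫ x, f x ∂s.toJordanDecomposition.negPart

/-- A signed measure on `ℝⁿ` supported on the unit sphere. -/
def SphSupported {n : ℕ} (s : SignedMeasure (Eucl n)) : Prop :=
  ∀ A : Set (Eucl n), MeasurableSet A → A ⊆ (Metric.sphere (0 : Eucl n) 1)ᶜ → s A = 0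

/-- Surface area of the unit sphere in `ℝᵐ` (`ω_m` in the paper). -/
def ωS (m : ℕ) : ℝ := ((μH[(m : ℝ) - 1] : Measure (Eucl m)) (Metric.sphere 0 1)).toReal

/-- The Legendre polynomial `P_k^n` of dimension `n` and degree `k`, normalized by
`P_k^n(1) = 1`. -/
def legP (n : ℕ) : ℕ → ℝ → ℝ
  | 0 => fun _ => 1
  | 1 => fun t => t
  | (k+2) => fun t =>
      ((2 * (k : ℝ) + n) * t * legP n (k+1) t - ((k : ℝ) + 1) * legP n k t) / ((k : ℝ) + n - 1)

/-- The Euclidean Laplacian on `ℝⁿ`. -/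
def eLap (n : ℕ) (f : Eucl n → ℝ) (x : Eucl n) : ℝ :=
  ∑ i : Fin n, iteratedFDeriv ℝ 2 f x (fun _ => EuclideanSpace.single i 1)

/-!
A zonal measure `ν` with pole `e` is invariant under the one-parameter rotation groups fixing `e`,
so differentiating along such a group, with generator `X`, gives `∫ h(⟪x, e⟫) (X f)(x) dν = 0`.
Applied to `f = X p` and summed over the rotations in the coordinate planes of `e^⊥`, this kills
the Laplacian of the spheres of latitude. For a solid harmonic `p` of degree `k + 1` on an
`n`-dimensional space, harmonicity and Euler's relation express that operator through `p`, `∂ₑ p`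
and `∂ₑ² p`:

`(k + 1) (k + n - 2) ∫ h p dν = (2 k + n - 2) ∫ h ⟪x, e⟫ ∂ₑ p dν - ∫ h ∂ₑ² p dν`.

Since `∂ₑ` lowers the degree of solid harmonics and `∂ₑ p(e) = (deg p) p(e)`, this is the three-term
recursion of the Legendre polynomials, and a two-step induction gives
`∫ h p dν = p(e) ∫ h P_k(⟪x, e⟫) dν`. For `h = 1` and `p ∘ R_v`, whose value at `e` is `p(v)`,
integration over `v` against `σ` yields the theorem.
-/

open scoped Topology ContDiff Laplacian

section SignedIntegral

variable {α β : Type*} [MeasurableSpace α] [MeasurableSpace β] {s : SignedMeasure α}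
  {f g : α → ℝ}

/-- The signed measure `s` lives on the set `K`: every measurable set missing `K` is `s`-null. -/
def ConcentratedOn (s : SignedMeasure α) (K : Set α) : Prop :=
  ∀ A : Set α, MeasurableSet A → A ⊆ Kᶜ → s A = 0

lemma ConcentratedOn.ae_mem {K : Set α} (hs : ConcentratedOn s K) (hK : MeasurableSet K) :
    ∀ᵐ x ∂s.variation, x ∈ K :=
  mem_ae_iff.2 <| (VectorMeasure.variation_apply_eq_zero hK.compl).2 fun A hA hAm => hs A hAm hA

lemma ConcentratedOn.integrable [TopologicalSpace α] [OpensMeasurableSpace α] [T2Space α]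
    {K : Set α} (hs : ConcentratedOn s K) (hK : IsCompact K) (hf : Continuous f) :
    s.Integrable f := by
  have : IsFiniteMeasure s.variation := s.totalVariation_eq_variation ▸ inferInstance
  have h := hf.continuousOn.integrableOn_compact (μ := s.variation) hK
  rwa [IntegrableOn, Measure.restrict_eq_self_of_ae_mem (hs.ae_mem hK.measurableSet)] at h

lemma posPart_le_variation (s : SignedMeasure α) :
    s.toJordanDecomposition.posPart ≤ s.variation := by
  rw [← s.totalVariation_eq_variation]
  exact Measure.le_add_right le_rfl

lemma negPart_le_variation (s : SignedMeasure α) :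
    s.toJordanDecomposition.negPart ≤ s.variation := by
  rw [← s.totalVariation_eq_variation]
  exact Measure.le_add_left le_rfl

lemma sint_congr_ae (h : f =ᵐ[s.variation] g) : sint s f = sint s g :=
  congrArg₂ (· - ·) (integral_congr_ae (h.filter_mono (ae_mono (posPart_le_variation s))))
    (integral_congr_ae (h.filter_mono (ae_mono (negPart_le_variation s))))

lemma sint_const_mul (s : SignedMeasure α) (c : ℝ) (f : α → ℝ) :
    sint s (fun x => c * f x) = c * sint s f := by
  simp only [sint, integral_const_mul, mul_sub]

lemma sint_eq_integral (hf : s.Integrable f) : sint s f = ∫ᵛ x, f x ∂<•s := by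
  have hpos := hf.mono_measure (posPart_le_variation s)
  have hneg := hf.mono_measure (negPart_le_variation s)
  conv_rhs => rw [← s.toSignedMeasure_toJordanDecomposition, JordanDecomposition.toSignedMeasure]
  rw [VectorMeasure.integral_sub_vectorMeasure, VectorMeasure.integral_toSignedMeasure,
    VectorMeasure.integral_toSignedMeasure, sint]
  · rwa [VectorMeasure.Integrable, Measure.variation_toSignedMeasure]
  · rwa [VectorMeasure.Integrable, Measure.variation_toSignedMeasure]

lemma sint_add (hf : s.Integrable f) (hg : s.Integrable g) :
    sint s (fun x => f x + g x) = sint s f + sint s g := by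
  rw [sint_eq_integral hf, sint_eq_integral hg, sint_eq_integral (hf.fun_add hg),
    VectorMeasure.integral_fun_add hf hg]

lemma sint_finsetSum {ι : Type*} (t : Finset ι) {f : ι → α → ℝ}
    (hf : ∀ i ∈ t, s.Integrable (f i)) :
    sint s (fun x => ∑ i ∈ t, f i x) = ∑ i ∈ t, sint s (f i) := by
  rw [sint_eq_integral (VectorMeasure.Integrable.fun_finsetSum t hf),
    VectorMeasure.integral_finsetSum t hf]
  exact Finset.sum_congr rfl fun i hi => (sint_eq_integral (hf i hi)).symm

lemma sint_map {φ : α → β} (hφ : Measurable φ) {f : β → ℝ}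
    (hfm : AEStronglyMeasurable f (s.variation.map φ)) (hf : s.Integrable (f ∘ φ)) :
    sint (s.map φ) f = sint s (f ∘ φ) := by
  rw [sint_eq_integral hf, sint_eq_integral (VectorMeasure.Integrable.map hfm hf),
    VectorMeasure.integral_map hφ hfm hf]
  rfl

lemma hasDerivAt_sint {F F' : ℝ → α → ℝ} {bound : α → ℝ} {t₀ : ℝ} {U : Set ℝ} (hU : U ∈ 𝓝 t₀)
    (hF_meas : ∀ᶠ t in 𝓝 t₀, AEStronglyMeasurable (F t) s.variation)
    (hF_int : s.Integrable (F t₀)) (hF'_meas : AEStronglyMeasurable (F' t₀) s.variation)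
    (h_bound : ∀ᵐ x ∂s.variation, ∀ t ∈ U, ‖F' t x‖ ≤ bound x)
    (bound_int : s.Integrable bound)
    (h_deriv : ∀ᵐ x ∂s.variation, ∀ t ∈ U, HasDerivAt (F · x) (F' t x) t) :
    HasDerivAt (fun t => sint s (F t)) (sint s (F' t₀)) t₀ := by
  have hasDerivAt_part {μ : Measure α} (hμ : μ ≤ s.variation) :
      HasDerivAt (fun t => ∫ x, F t x ∂μ) (∫ x, F' t₀ x ∂μ) t₀ :=
    (hasDerivAt_integral_of_dominated_loc_of_deriv_le hU
      (hF_meas.mono fun _ h => h.mono_measure hμ) (hF_int.mono_measure hμ)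
      (hF'_meas.mono_measure hμ) (h_bound.filter_mono (ae_mono hμ)) (bound_int.mono_measure hμ)
      (h_deriv.filter_mono (ae_mono hμ))).2
  exact (hasDerivAt_part (posPart_le_variation s)).sub (hasDerivAt_part (negPart_le_variation s))

end SignedIntegral

section Rotation

open NormedSpace InnerProductSpace

variable {E : Type*} [NormedAddCommGroup E] [InnerProductSpace ℝ E]

section Complete

variable [CompleteSpace E]

/-- The rotation `exp A` with infinitesimal generator the skew-adjoint map `A`. -/
def expRotation (A : skewAdjoint (E →L[ℝ] E)) : E ≃ₗᵢ[ℝ] E :=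
  letI := NormedAlgebra.restrictScalars ℚ ℝ (E →L[ℝ] E)
  Unitary.linearIsometryEquiv ⟨exp (A : E →L[ℝ] E), exp_mem_unitary_of_mem_skewAdjoint A.2⟩

lemma expRotation_apply (A : skewAdjoint (E →L[ℝ] E)) (x : E) :
    expRotation A x = exp (A : E →L[ℝ] E) x := rfl

lemma expRotation_zero_apply (x : E) : expRotation (0 : skewAdjoint (E →L[ℝ] E)) x = x := by
  rw [expRotation_apply, ZeroMemClass.coe_zero, exp_zero, one_apply_eq_self]

lemma expRotation_add_self_apply (A : skewAdjoint (E →L[ℝ] E)) (x : E) :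
    expRotation (A + A) x = expRotation A (expRotation A x) := by
  let _ := NormedAlgebra.restrictScalars ℚ ℝ (E →L[ℝ] E)
  exact DFunLike.congr_fun (exp_add_of_commute (Commute.refl (A : E →L[ℝ] E))) x

lemma hasDerivAt_expRotation_smul (A : skewAdjoint (E →L[ℝ] E)) (x : E) (t : ℝ) :
    HasDerivAt (fun t : ℝ => expRotation (t • A) x)
      ((A : E →L[ℝ] E) (expRotation (t • A) x)) t := by
  simpa [expRotation_apply] using
    (hasDerivAt_exp_smul_const' (A : E →L[ℝ] E) t).clm_apply (hasDerivAt_const t x)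

lemma expRotation_apply_eq_self {A : skewAdjoint (E →L[ℝ] E)} {x : E}
    (hx : (A : E →L[ℝ] E) x = 0) : expRotation A x = x := by
  have hderiv (t : ℝ) : HasDerivAt (fun t : ℝ => expRotation (t • A) x) 0 t := by
    simpa [expRotation_apply, hx] using
      (hasDerivAt_exp_smul_const (A : E →L[ℝ] E) t).clm_apply (hasDerivAt_const t x)
  have hconst := is_const_of_deriv_eq_zero (fun t => (hderiv t).differentiableAt)
    (fun t => (hderiv t).deriv) 1 0
  rwa [one_smul, zero_smul, expRotation_zero_apply] at hconst

/-- The infinitesimal rotation `x ↦ ⟪a, x⟫ b - ⟪b, x⟫ a` in the plane spanned by `a` and `b`. -/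
def planeGenerator (a b : E) : skewAdjoint (E →L[ℝ] E) :=
  ⟨rankOne ℝ b a - rankOne ℝ a b, by
    simp [skewAdjoint.mem_iff, ContinuousLinearMap.star_eq_adjoint]⟩

lemma planeGenerator_apply (a b x : E) :
    (planeGenerator a b : E →L[ℝ] E) x = ⟪a, x⟫ • b - ⟪b, x⟫ • a := rfl

/-- The derivative of `f` along the linear vector field `x ↦ A x`. -/
def rotDeriv (A : skewAdjoint (E →L[ℝ] E)) (f : E → ℝ) (x : E) : ℝ :=
  fderiv ℝ f x ((A : E →L[ℝ] E) x)

lemma contDiff_rotDeriv {m n : WithTop ℕ∞} {f : E → ℝ} (hf : ContDiff ℝ n f) (hmn : m + 1 ≤ n)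
    (A : skewAdjoint (E →L[ℝ] E)) : ContDiff ℝ m (rotDeriv A f) :=
  (hf.fderiv_right hmn).clm_apply (A : E →L[ℝ] E).contDiff

lemma rotDeriv_rotDeriv {f : E → ℝ} (hf : ContDiff ℝ 2 f) (A : skewAdjoint (E →L[ℝ] E)) (x : E) :
    rotDeriv A (rotDeriv A f) x =
      fderiv ℝ (fderiv ℝ f) x ((A : E →L[ℝ] E) x) ((A : E →L[ℝ] E) x) +
        fderiv ℝ f x ((A : E →L[ℝ] E) ((A : E →L[ℝ] E) x)) := by
  have hdiff : DifferentiableAt ℝ (fderiv ℝ f) x :=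
    (hf.fderiv_right (m := 1) le_rfl).differentiable one_ne_zero x
  change fderiv ℝ (fun y => fderiv ℝ f y ((A : E →L[ℝ] E) y)) x _ = _
  rw [fderiv_clm_apply hdiff (A : E →L[ℝ] E).differentiableAt, add_comm]
  simp

end Complete

variable [FiniteDimensional ℝ E]

lemma abs_det_linearIsometryEquiv (g : E ≃ₗᵢ[ℝ] E) :
    |(LinearEquiv.det g.toLinearEquiv : ℝ)| = 1 := by
  rw [LinearEquiv.coe_det, ← Real.norm_eq_abs, ← LinearMap.normDet_eq_norm_det]
  exact g.toLinearIsometry.normDet_eq_one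

lemma det_expRotation (A : skewAdjoint (E →L[ℝ] E)) :
    LinearEquiv.det (expRotation A).toLinearEquiv = 1 := by
  set H := expRotation ((2⁻¹ : ℝ) • A)
  have hsq : (expRotation A).toLinearEquiv = H.toLinearEquiv * H.toLinearEquiv := by
    ext x
    have hhalf : A = (2⁻¹ : ℝ) • A + (2⁻¹ : ℝ) • A := by module
    calc expRotation A x = expRotation ((2⁻¹ : ℝ) • A + (2⁻¹ : ℝ) • A) x := by rw [← hhalf]
      _ = H (H x) := expRotation_add_self_apply _ x
  rw [hsq, map_mul, Units.ext_iff, Units.val_mul, ← abs_mul_abs_self, abs_det_linearIsometryEquiv,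
    mul_one, Units.val_one]

variable [MeasurableSpace E] [BorelSpace E] {e : E} {s : SignedMeasure E}

/-- The signed measure `s` is zonal with pole `e`: it is invariant under the rotations of
determinant one that fix `e`. -/
def IsZonal (e : E) (s : SignedMeasure E) : Prop :=
  ∀ g : E ≃ₗᵢ[ℝ] E, g e = e → LinearEquiv.det g.toLinearEquiv = 1 → s.map g = s

lemma IsZonal.sint_comp_expRotation (hz : IsZonal e s)
    (hs : ConcentratedOn s (Metric.sphere 0 1)) {A : skewAdjoint (E →L[ℝ] E)}
    (hA : (A : E →L[ℝ] E) e = 0) {f : E → ℝ} (hf : Continuous f) :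
    sint s (fun x => f (expRotation A x)) = sint s f := by
  have hcont := (expRotation A).continuous
  calc sint s (fun x => f (expRotation A x)) = sint (s.map (expRotation A)) f :=
        (sint_map hcont.measurable hf.aestronglyMeasurable
          (hs.integrable (isCompact_sphere 0 1) (hf.comp hcont))).symm
    _ = sint s f := by rw [hz _ (expRotation_apply_eq_self hA) (det_expRotation A)]

lemma hasDerivAt_sint_mul_comp_expRotation (hs : ConcentratedOn s (Metric.sphere 0 1))
    (A : skewAdjoint (E →L[ℝ] E)) {f w : E → ℝ} (hf : ContDiff ℝ 1 f) (hw : Continuous w) :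
    HasDerivAt (fun t : ℝ => sint s (fun x => w x * f (expRotation (t • A) x)))
      (sint s (fun x => w x * rotDeriv A f x)) 0 := by
  have hXf : Continuous (rotDeriv A f) := (contDiff_rotDeriv (m := 0) hf (by simp) A).continuous
  have hrot (t : ℝ) : Continuous (expRotation (t • A)) := (expRotation (t • A)).continuous
  obtain ⟨C, hC⟩ := (isCompact_sphere (0 : E) 1).exists_bound_of_continuousOn hXf.continuousOn
  have hderiv := hasDerivAt_sint (s := s) (t₀ := 0) (bound := fun x => ‖w x‖ * C)
    (F := fun t x => w x * f (expRotation (t • A) x))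
    (F' := fun t x => w x * rotDeriv A f (expRotation (t • A) x))
    Filter.univ_mem
    (.of_forall fun t => (hw.mul (hf.continuous.comp (hrot t))).aestronglyMeasurable)
    (hs.integrable (isCompact_sphere 0 1) (hw.mul (hf.continuous.comp (hrot 0))))
    (hw.mul (hXf.comp (hrot 0))).aestronglyMeasurable ?_
    (hs.integrable (isCompact_sphere 0 1) (hw.norm.mul continuous_const)) ?_
  · simpa only [zero_smul, expRotation_zero_apply] using hderiv
  · filter_upwards [hs.ae_mem Metric.isClosed_sphere.measurableSet] with x hx t _
    rw [norm_mul]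
    gcongr
    exact hC _ (by simpa using hx)
  · exact .of_forall fun x t _ => ((hf.differentiable one_ne_zero _).hasFDerivAt.comp_hasDerivAt t
      (hasDerivAt_expRotation_smul A x t)).const_mul _

lemma IsZonal.sint_mul_rotDeriv_eq_zero (hz : IsZonal e s)
    (hs : ConcentratedOn s (Metric.sphere 0 1)) {A : skewAdjoint (E →L[ℝ] E)}
    (hA : (A : E →L[ℝ] E) e = 0) {f : E → ℝ} (hf : ContDiff ℝ 1 f)
    {h : ℝ → ℝ} (hh : Continuous h) :
    sint s (fun x => h ⟪x, e⟫ * rotDeriv A f x) = 0 := by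
  have hhe : Continuous fun x : E => h ⟪x, e⟫ := by fun_prop
  have hinv (t : ℝ) : sint s (fun x => h ⟪x, e⟫ * f (expRotation (t • A) x)) =
      sint s (fun x => h ⟪x, e⟫ * f x) := by
    have htA : ((t • A : skewAdjoint (E →L[ℝ] E)) : E →L[ℝ] E) e = 0 := by simp [hA]
    have hinner (x : E) : ⟪expRotation (t • A) x, e⟫ = ⟪x, e⟫ := by
      conv_lhs => rw [← expRotation_apply_eq_self htA, LinearIsometryEquiv.inner_map_map]
    simpa only [hinner] using hz.sint_comp_expRotation hs htA (hhe.fun_mul hf.continuous)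
  have hderiv := hasDerivAt_sint_mul_comp_expRotation hs A hf hhe
  simp only [hinv] at hderiv
  exact hderiv.unique (hasDerivAt_const 0 _)

end Rotation

section SolidHarmonic

open InnerProductSpace

section Normed

variable {E : Type*} [NormedAddCommGroup E] [NormedSpace ℝ E] {f : E → ℝ}

/-- The derivative of `f` along the constant vector field `v`. -/
def dirDeriv (v : E) (f : E → ℝ) (x : E) : ℝ := fderiv ℝ f x v

lemma contDiff_dirDeriv {m n : WithTop ℕ∞} (hf : ContDiff ℝ n f) (hmn : m + 1 ≤ n) (v : E) :
    ContDiff ℝ m (dirDeriv v f) :=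
  (hf.fderiv_right hmn).clm_apply contDiff_const

lemma dirDeriv_dirDeriv (hf : ContDiff ℝ 2 f) (v w x : E) :
    dirDeriv v (dirDeriv w f) x = fderiv ℝ (fderiv ℝ f) x v w := by
  have hdiff : DifferentiableAt ℝ (fderiv ℝ f) x :=
    (hf.fderiv_right (m := 1) le_rfl).differentiable one_ne_zero x
  change fderiv ℝ (fun y => fderiv ℝ f y w) x v = _
  rw [fderiv_clm_apply hdiff (differentiableAt_const w)]
  simp

lemma fderiv_fderiv_comm (hf : ContDiff ℝ 2 f) (x v w : E) :
    fderiv ℝ (fderiv ℝ f) x v w = fderiv ℝ (fderiv ℝ f) x w v :=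
  hf.contDiffAt.isSymmSndFDerivAt (by rw [minSmoothness_of_isRCLikeNormedField]) v w

lemma dirDeriv_comm (hf : ContDiff ℝ 2 f) (v w : E) :
    dirDeriv v (dirDeriv w f) = dirDeriv w (dirDeriv v f) :=
  funext fun x => by
    rw [dirDeriv_dirDeriv hf, dirDeriv_dirDeriv hf, fderiv_fderiv_comm hf]

/-- The function `f` is homogeneous of degree `k`, for all real scalars including `0`. -/
def IsHomogeneousFun (k : ℕ) (f : E → ℝ) : Prop := ∀ (c : ℝ) (x : E), f (c • x) = c ^ k * f x

lemma IsHomogeneousFun.eq_of_degree_zero (hf : IsHomogeneousFun 0 f) (x y : E) : f x = f y := by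
  have hzero (z : E) : f z = f 0 := by simpa using (hf 0 z).symm
  rw [hzero x, hzero y]

lemma IsHomogeneousFun.fderiv_apply_self {k : ℕ} (hk : IsHomogeneousFun k f)
    {x : E} (hf : DifferentiableAt ℝ f x) : fderiv ℝ f x x = k * f x := by
  have hline : HasDerivAt (fun c : ℝ => c • x) x 1 := by
    simpa using (hasDerivAt_id (1 : ℝ)).smul_const x
  have hcomp : HasDerivAt (fun c : ℝ => f (c • x)) (fderiv ℝ f x x) 1 :=
    HasFDerivAt.comp_hasDerivAt (l := f) 1 (by simpa using hf.hasFDerivAt) hline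
  have hpow : HasDerivAt (fun c : ℝ => c ^ k * f x) (k * f x) 1 := by
    simpa using (hasDerivAt_pow k (1 : ℝ)).mul_const (f x)
  simp only [hk _ x] at hcomp
  exact hcomp.unique hpow

lemma isHomogeneousFun_dirDeriv {k : ℕ} (hk : IsHomogeneousFun (k + 1) f) (hf : ContDiff ℝ 1 f)
    (v : E) : IsHomogeneousFun k (dirDeriv v f) := by
  have hdiff := hf.differentiable one_ne_zero
  have hscale (c : ℝ) (x : E) :
      c * dirDeriv v f (c • x) = c ^ (k + 1) * dirDeriv v f x := by
    have hcomp := (hdiff (c • x)).hasFDerivAt.comp x ((hasFDerivAt_id x).const_smul c)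
    have hpow := (hdiff x).hasFDerivAt.const_mul (c ^ (k + 1))
    simp only [← hk c] at hpow
    simpa [dirDeriv] using DFunLike.congr_fun (hcomp.unique hpow) v
  intro c x
  -- Dividing `hscale` by `c` misses only `c = 0`, which is recovered by continuity.
  have hcont : Continuous fun c : ℝ => dirDeriv v f (c • x) :=
    (contDiff_dirDeriv (m := 0) hf (by simp) v).continuous.comp (by fun_prop)
  have heq : (fun c : ℝ => dirDeriv v f (c • x)) = fun c => c ^ k * dirDeriv v f x :=
    hcont.ext_on (dense_compl_singleton (0 : ℝ)) (by fun_prop) fun c hc =>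
      mul_left_cancel₀ hc (by rw [hscale, pow_succ', mul_assoc])
  exact congrFun heq c

end Normed

variable {E : Type*} [NormedAddCommGroup E] [InnerProductSpace ℝ E] [FiniteDimensional ℝ E]
  {k : ℕ} {f p : E → ℝ}

lemma laplacian_eq_sum_fderiv_fderiv {ι : Type*} [Fintype ι] (b : OrthonormalBasis ι ℝ E)
    (f : E → ℝ) (x : E) : Δ f x = ∑ i, fderiv ℝ (fderiv ℝ f) x (b i) (b i) := by
  simp [laplacian_eq_iteratedFDeriv_orthonormalBasis f b, iteratedFDeriv_two_apply]

lemma laplacian_dirDeriv (hf : ContDiff ℝ 3 f) (v x : E) :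
    Δ (dirDeriv v f) x = dirDeriv v (Δ f) x := by
  let b := stdOrthonormalBasis ℝ E
  have h12 : (1 + 1 : WithTop ℕ∞) ≤ 2 := by norm_num
  have h23 : (2 + 1 : WithTop ℕ∞) ≤ 3 := by norm_num
  have hf2 : ContDiff ℝ 2 f := hf.of_le (by norm_num)
  have hlap : Δ f = fun y => ∑ i, dirDeriv (b i) (dirDeriv (b i) f) y := funext fun y => by
    simp only [laplacian_eq_sum_fderiv_fderiv b, dirDeriv_dirDeriv hf2]
  have hswap (i) : dirDeriv (b i) (dirDeriv (b i) (dirDeriv v f)) =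
      dirDeriv v (dirDeriv (b i) (dirDeriv (b i) f)) := by
    rw [dirDeriv_comm hf2, dirDeriv_comm (contDiff_dirDeriv hf h23 _)]
  have hdiff (i) : DifferentiableAt ℝ (dirDeriv (b i) (dirDeriv (b i) f)) x :=
    (contDiff_dirDeriv (contDiff_dirDeriv hf h23 _) h12 _).differentiable one_ne_zero x
  calc Δ (dirDeriv v f) x = ∑ i, dirDeriv (b i) (dirDeriv (b i) (dirDeriv v f)) x := by
        simp only [laplacian_eq_sum_fderiv_fderiv b,
          dirDeriv_dirDeriv (contDiff_dirDeriv hf h23 v)]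
    _ = ∑ i, fderiv ℝ (dirDeriv (b i) (dirDeriv (b i) f)) x v := by simp only [hswap]; rfl
    _ = dirDeriv v (Δ f) x := by
        rw [hlap, dirDeriv, fderiv_fun_sum fun i _ => hdiff i, sum_apply]

lemma laplacian_comp_linearIsometryEquiv (hf : ContDiff ℝ 2 f) (g : E ≃ₗᵢ[ℝ] E) (x : E) :
    Δ (f ∘ g) x = Δ f (g x) := by
  let b := stdOrthonormalBasis ℝ E
  have hcomp := (g : E →L[ℝ] E).iteratedFDeriv_comp_right hf x le_rfl
  rw [laplacian_eq_iteratedFDeriv_orthonormalBasis (f ∘ g) b,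
    laplacian_eq_iteratedFDeriv_orthonormalBasis f (b.map g)]
  refine Finset.sum_congr rfl fun i _ => (DFunLike.congr_fun hcomp _).trans ?_
  simp [iteratedFDeriv_two_apply]

/-- A solid harmonic of degree `k`: a smooth harmonic function homogeneous of degree `k`. Its
restriction to the unit sphere is a spherical harmonic of degree `k`. -/
structure IsSolidHarmonic (k : ℕ) (p : E → ℝ) : Prop where
  contDiff : ContDiff ℝ ∞ p
  homogeneous : IsHomogeneousFun k p
  laplacian_eq_zero : ∀ x, Δ p x = 0

lemma IsSolidHarmonic.dirDeriv_self (hp : IsSolidHarmonic k p) (x : E) :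
    dirDeriv x p x = k * p x :=
  hp.homogeneous.fderiv_apply_self ((contDiff_infty.1 hp.contDiff 1).differentiable one_ne_zero x)

lemma isSolidHarmonic_dirDeriv (hp : IsSolidHarmonic (k + 1) p) (v : E) :
    IsSolidHarmonic k (dirDeriv v p) where
  contDiff := contDiff_dirDeriv hp.contDiff le_rfl v
  homogeneous := isHomogeneousFun_dirDeriv hp.homogeneous (contDiff_infty.1 hp.contDiff 1) v
  laplacian_eq_zero x := by
    rw [laplacian_dirDeriv (contDiff_infty.1 hp.contDiff 3), funext hp.laplacian_eq_zero]
    simp [dirDeriv]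

lemma IsSolidHarmonic.comp_linearIsometryEquiv (hp : IsSolidHarmonic k p) (g : E ≃ₗᵢ[ℝ] E) :
    IsSolidHarmonic k (p ∘ g) where
  contDiff := hp.contDiff.comp g.contDiff
  homogeneous c x := by simp [hp.homogeneous c]
  laplacian_eq_zero x := by
    rw [laplacian_comp_linearIsometryEquiv (contDiff_infty.1 hp.contDiff 2), hp.laplacian_eq_zero]

end SolidHarmonic

section AngularLaplacian

open InnerProductSpace

variable {E : Type*} [NormedAddCommGroup E] [InnerProductSpace ℝ E] {ι : Type*} [Fintype ι]

section Family

variable [CompleteSpace E] (a : ι → E) (x : E)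

lemma sum_bilin_planeGenerator (B : E →ₗ[ℝ] E →ₗ[ℝ] ℝ) :
    ∑ i, ∑ j, B ((planeGenerator (a i) (a j) : E →L[ℝ] E) x)
        ((planeGenerator (a i) (a j) : E →L[ℝ] E) x) =
      2 * (∑ i, ⟪a i, x⟫ ^ 2) * (∑ i, B (a i) (a i)) -
        2 * B (∑ i, ⟪a i, x⟫ • a i) (∑ i, ⟪a i, x⟫ • a i) := by
  have hdiag : ∑ i, ∑ j, ⟪a i, x⟫ ^ 2 * B (a j) (a j) =
      (∑ i, ⟪a i, x⟫ ^ 2) * ∑ i, B (a i) (a i) := by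
    rw [Finset.sum_mul_sum]
  have hcross : ∑ i, ∑ j, ⟪a i, x⟫ * ⟪a j, x⟫ * B (a j) (a i) =
      B (∑ i, ⟪a i, x⟫ • a i) (∑ i, ⟪a i, x⟫ • a i) := by
    simp only [map_sum, LinearMap.sum_apply, map_smul, LinearMap.smul_apply, smul_eq_mul,
      Finset.mul_sum, mul_assoc]
  have hexpand (i j : ι) : B ((planeGenerator (a i) (a j) : E →L[ℝ] E) x)
        ((planeGenerator (a i) (a j) : E →L[ℝ] E) x) =
      ⟪a i, x⟫ ^ 2 * B (a j) (a j) + ⟪a j, x⟫ ^ 2 * B (a i) (a i) -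
        (⟪a i, x⟫ * ⟪a j, x⟫ * B (a j) (a i) + ⟪a j, x⟫ * ⟪a i, x⟫ * B (a i) (a j)) := by
    simp only [planeGenerator_apply, map_sub, map_smul, LinearMap.sub_apply, LinearMap.smul_apply,
      smul_eq_mul]
    ring
  simp only [hexpand, Finset.sum_sub_distrib, Finset.sum_add_distrib]
  rw [Finset.sum_comm (f := fun i j => ⟪a j, x⟫ ^ 2 * B (a i) (a i)),
    Finset.sum_comm (f := fun i j => ⟪a j, x⟫ * ⟪a i, x⟫ * B (a i) (a j)), hdiag, hcross]
  ring

lemma sum_planeGenerator_planeGenerator :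
    ∑ i, ∑ j, (planeGenerator (a i) (a j) : E →L[ℝ] E)
        ((planeGenerator (a i) (a j) : E →L[ℝ] E) x) =
      (2 : ℝ) • (∑ i, ⟪a i, ∑ j, ⟪a j, x⟫ • a j⟫ • a i) -
        (2 * ∑ i, ⟪a i, a i⟫) • ∑ i, ⟪a i, x⟫ • a i := by
  have hdouble : ∑ i, ∑ j, (⟪a j, x⟫ * ⟪a i, a j⟫) • a i =
      ∑ i, ⟪a i, ∑ j, ⟪a j, x⟫ • a j⟫ • a i := by
    simp only [inner_sum, real_inner_smul_right, Finset.sum_smul]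
  have htrace : ∑ i, ∑ j, (⟪a j, a j⟫ * ⟪a i, x⟫) • a i =
      (∑ i, ⟪a i, a i⟫) • ∑ i, ⟪a i, x⟫ • a i := by
    rw [Finset.sum_comm, Finset.sum_smul]
    simp only [mul_smul, Finset.smul_sum]
  have hexpand (i j : ι) : (planeGenerator (a i) (a j) : E →L[ℝ] E)
        ((planeGenerator (a i) (a j) : E →L[ℝ] E) x) =
      (⟪a j, x⟫ * ⟪a i, a j⟫) • a i + (⟪a i, x⟫ * ⟪a j, a i⟫) • a j -
        ((⟪a j, a j⟫ * ⟪a i, x⟫) • a i + (⟪a i, a i⟫ * ⟪a j, x⟫) • a j) := by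
    simp only [planeGenerator_apply, inner_sub_right, real_inner_smul_right,
      real_inner_comm (a i) (a j)]
    module
  simp only [hexpand, Finset.sum_sub_distrib, Finset.sum_add_distrib]
  rw [Finset.sum_comm (f := fun i j => (⟪a i, x⟫ * ⟪a j, a i⟫) • a j),
    Finset.sum_comm (f := fun i j => (⟪a i, a i⟫ * ⟪a j, x⟫) • a j), hdouble, htrace]
  module

end Family

/-- The orthogonal projections of the vectors of an orthonormal basis `b` to the hyperplane
orthogonal to the unit vector `e`. They form a tight frame of it, which serves as a substitute for
an orthonormal basis of the hyperplane. -/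
def equatorFrame (b : OrthonormalBasis ι ℝ E) (e : E) (i : ι) : E := b i - ⟪b i, e⟫ • e

variable (b : OrthonormalBasis ι ℝ E) {e : E}

lemma inner_equatorFrame (he : ‖e‖ = 1) (i : ι) : ⟪equatorFrame b e i, e⟫ = 0 := by
  simp [equatorFrame, inner_sub_left, real_inner_smul_left, he]

lemma planeGenerator_equatorFrame_pole [CompleteSpace E] (he : ‖e‖ = 1) (i j : ι) :
    (planeGenerator (equatorFrame b e i) (equatorFrame b e j) : E →L[ℝ] E) e = 0 := by
  simp [planeGenerator_apply, inner_equatorFrame b he]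

lemma sum_bilin_equatorFrame (he : ‖e‖ = 1) {F : Type*} [AddCommGroup F] [Module ℝ F]
    (B : E →ₗ[ℝ] E →ₗ[ℝ] F) :
    ∑ i, B (equatorFrame b e i) (equatorFrame b e i) = ∑ i, B (b i) (b i) - B e e := by
  have hleft : ∑ i, ⟪b i, e⟫ • B (b i) e = B e e := by
    simpa [LinearMap.sum_apply] using congrArg (B · e) (b.sum_repr' e)
  have hright : ∑ i, ⟪b i, e⟫ • B e (b i) = B e e := by
    simpa using congrArg (B e) (b.sum_repr' e)
  have hnorm : ∑ i, ⟪b i, e⟫ ^ 2 = 1 := by rw [b.sum_sq_inner_right, he, one_pow]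
  have hexpand (i : ι) : B (equatorFrame b e i) (equatorFrame b e i) =
      B (b i) (b i) - ⟪b i, e⟫ • B (b i) e - ⟪b i, e⟫ • B e (b i) + ⟪b i, e⟫ ^ 2 • B e e := by
    simp only [equatorFrame, map_sub, map_smul, LinearMap.sub_apply, LinearMap.smul_apply]
    module
  simp only [hexpand, Finset.sum_add_distrib, Finset.sum_sub_distrib, ← Finset.sum_smul, hleft,
    hright, hnorm]
  module

lemma sum_inner_smul_equatorFrame (he : ‖e‖ = 1) (x : E) :
    ∑ i, ⟪equatorFrame b e i, x⟫ • equatorFrame b e i = x - ⟪e, x⟫ • e := by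
  have hrepr : ∑ i, ⟪x, b i⟫ • b i = x := by
    simpa only [real_inner_comm] using b.sum_repr' x
  have h := sum_bilin_equatorFrame b he ((LinearMap.lsmul ℝ E).comp (innerₗ E x))
  simpa [real_inner_comm x, hrepr] using h

lemma sum_inner_equatorFrame_sq (he : ‖e‖ = 1) (x : E) :
    ∑ i, ⟪equatorFrame b e i, x⟫ ^ 2 = ‖x‖ ^ 2 - ⟪e, x⟫ ^ 2 := by
  have h := congrArg (⟪·, x⟫) (sum_inner_smul_equatorFrame b he x)
  simpa [sum_inner, inner_sub_left, real_inner_smul_left, ← sq] using h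

lemma sum_inner_equatorFrame_self (he : ‖e‖ = 1) :
    ∑ i, ⟪equatorFrame b e i, equatorFrame b e i⟫ = (Module.finrank ℝ E : ℝ) - 1 := by
  have h := sum_bilin_equatorFrame b he (innerₗ E)
  simpa [Module.finrank_eq_card_basis b.toBasis, he] using h

lemma sum_planeGenerator_planeGenerator_equatorFrame [CompleteSpace E] (he : ‖e‖ = 1) (x : E) :
    ∑ i, ∑ j, (planeGenerator (equatorFrame b e i) (equatorFrame b e j) : E →L[ℝ] E)
        ((planeGenerator (equatorFrame b e i) (equatorFrame b e j) : E →L[ℝ] E) x) =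
      -(2 * (Module.finrank ℝ E - 2) : ℝ) • (x - ⟪e, x⟫ • e) := by
  have hproj : ⟪e, x - ⟪e, x⟫ • e⟫ = 0 := by
    simp [inner_sub_right, real_inner_smul_right, he]
  rw [sum_planeGenerator_planeGenerator, sum_inner_equatorFrame_self b he,
    sum_inner_smul_equatorFrame b he x, sum_inner_smul_equatorFrame b he, hproj]
  module

variable [FiniteDimensional ℝ E] {f p : E → ℝ}

lemma sum_rotDeriv_rotDeriv_equatorFrame (he : ‖e‖ = 1) (hf : ContDiff ℝ 2 f) (x : E) :
    ∑ i, ∑ j, rotDeriv (planeGenerator (equatorFrame b e i) (equatorFrame b e j))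
        (rotDeriv (planeGenerator (equatorFrame b e i) (equatorFrame b e j)) f) x =
      2 * ((‖x‖ ^ 2 - ⟪e, x⟫ ^ 2) * (Δ f x - fderiv ℝ (fderiv ℝ f) x e e) -
        fderiv ℝ (fderiv ℝ f) x (x - ⟪e, x⟫ • e) (x - ⟪e, x⟫ • e) -
        (Module.finrank ℝ E - 2) * fderiv ℝ f x (x - ⟪e, x⟫ • e)) := by
  have hquad := sum_bilin_planeGenerator (equatorFrame b e) x
    (fderiv ℝ (fderiv ℝ f) x).toLinearMap₁₂
  have htrace := sum_bilin_equatorFrame b he (fderiv ℝ (fderiv ℝ f) x).toLinearMap₁₂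
  have hlin := congrArg (fderiv ℝ f x) (sum_planeGenerator_planeGenerator_equatorFrame b he x)
  rw [sum_inner_smul_equatorFrame b he, sum_inner_equatorFrame_sq b he, htrace] at hquad
  simp only [ContinuousLinearMap.toLinearMap₁₂_apply, LinearMap.comp_apply,
    ContinuousLinearMap.coeLMₛₗ_apply, ContinuousLinearMap.coe_coe] at hquad
  simp only [map_sum, map_smul, smul_eq_mul] at hlin
  simp only [rotDeriv_rotDeriv hf, Finset.sum_add_distrib]
  rw [hquad, hlin, laplacian_eq_sum_fderiv_fderiv b]
  ring

lemma IsSolidHarmonic.sum_rotDeriv_rotDeriv {k : ℕ} (hp : IsSolidHarmonic (k + 1) p)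
    (he : ‖e‖ = 1) {x : E} (hx : ‖x‖ = 1) :
    ∑ i, ∑ j, rotDeriv (planeGenerator (equatorFrame b e i) (equatorFrame b e j))
        (rotDeriv (planeGenerator (equatorFrame b e i) (equatorFrame b e j)) p) x =
      2 * ((2 * k + Module.finrank ℝ E - 2) * (⟪x, e⟫ * dirDeriv e p x) -
        dirDeriv e (dirDeriv e p) x - (k + 1) * (k + Module.finrank ℝ E - 2) * p x) := by
  have hp2 : ContDiff ℝ 2 p := contDiff_infty.1 hp.contDiff 2
  have heuler : fderiv ℝ p x x = (k + 1) * p x := by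
    simpa [dirDeriv] using hp.dirDeriv_self x
  have heuler' (w : E) : fderiv ℝ (fderiv ℝ p) x w x = k * dirDeriv w p x := by
    rw [fderiv_fderiv_comm hp2, ← dirDeriv_dirDeriv hp2,
      (isSolidHarmonic_dirDeriv hp w).dirDeriv_self]
  rw [sum_rotDeriv_rotDeriv_equatorFrame b he hp2, hp.laplacian_eq_zero, hx,
    dirDeriv_dirDeriv hp2, real_inner_comm]
  simp only [map_sub, map_smul, sub_apply, smul_apply,
    smul_eq_mul, heuler', heuler, fderiv_fderiv_comm hp2 x x e]
  simp only [dirDeriv, heuler]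
  ring

end AngularLaplacian

lemma continuous_legP (n : ℕ) : ∀ k, Continuous (legP n k)
  | 0 => continuous_const
  | 1 => continuous_id
  | k + 2 => by
    have hk := continuous_legP n k
    have hk1 := continuous_legP n (k + 1)
    simp only [legP]
    fun_prop

section FunkHecke

open Module

variable {E : Type*} [NormedAddCommGroup E] [InnerProductSpace ℝ E] [MeasurableSpace E]
  {e : E} {ν : SignedMeasure E} {p : E → ℝ} {k : ℕ} {h : ℝ → ℝ}

lemma IsHomogeneousFun.sint_mul_of_degree_zero (hp : IsHomogeneousFun 0 p) (n : ℕ) (h : ℝ → ℝ)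
    (e : E) :
    sint ν (fun x => h ⟪x, e⟫ * p x) = p e * sint ν (fun x => h ⟪x, e⟫ * legP n 0 ⟪x, e⟫) := by
  rw [← sint_const_mul]
  congr 1 with x
  rw [hp.eq_of_degree_zero x e, legP]
  ring

variable [FiniteDimensional ℝ E] [BorelSpace E]

lemma sint_mul_legP_add_two (hν : ConcentratedOn ν (Metric.sphere 0 1)) (n : ℕ)
    (hh : Continuous h) (e : E) :
    sint ν (fun x => h ⟪x, e⟫ * legP n (k + 2) ⟪x, e⟫) =
      (2 * k + n) / (k + n - 1) * sint ν (fun x => h ⟪x, e⟫ * ⟪x, e⟫ * legP n (k + 1) ⟪x, e⟫) +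
        -((k + 1) / (k + n - 1)) * sint ν (fun x => h ⟪x, e⟫ * legP n k ⟪x, e⟫) := by
  have hk := continuous_legP n k
  have hk1 := continuous_legP n (k + 1)
  rw [← sint_const_mul, ← sint_const_mul, ← sint_add]
  · congr 1 with x
    simp only [legP]
    ring
  all_goals exact hν.integrable (isCompact_sphere 0 1) (by fun_prop)

lemma IsZonal.sint_mul_sum_rotDeriv_rotDeriv_eq_zero {ι : Type*} [Fintype ι] (hz : IsZonal e ν)
    (hν : ConcentratedOn ν (Metric.sphere 0 1)) (he : ‖e‖ = 1) (b : OrthonormalBasis ι ℝ E)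
    (hp : ContDiff ℝ 2 p) (hh : Continuous h) :
    sint ν (fun x => h ⟪x, e⟫ *
      ∑ i, ∑ j, rotDeriv (planeGenerator (equatorFrame b e i) (equatorFrame b e j))
        (rotDeriv (planeGenerator (equatorFrame b e i) (equatorFrame b e j)) p) x) = 0 := by
  have hXp (A : skewAdjoint (E →L[ℝ] E)) : ContDiff ℝ 1 (rotDeriv A p) :=
    contDiff_rotDeriv hp le_rfl A
  have hXXp (A : skewAdjoint (E →L[ℝ] E)) :
      Continuous fun x => h ⟪x, e⟫ * rotDeriv A (rotDeriv A p) x := by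
    have := (contDiff_rotDeriv (m := 0) (hXp A) (by simp) A).continuous
    fun_prop
  simp only [Finset.mul_sum]
  rw [sint_finsetSum _ fun i _ => hν.integrable (isCompact_sphere 0 1)
    (continuous_finsetSum _ fun j _ => hXXp _)]
  refine Finset.sum_eq_zero fun i _ => ?_
  rw [sint_finsetSum _ fun j _ => hν.integrable (isCompact_sphere 0 1) (hXXp _)]
  exact Finset.sum_eq_zero fun j _ => hz.sint_mul_rotDeriv_eq_zero hν
    (planeGenerator_equatorFrame_pole b he i j) (hXp _) hh

lemma IsZonal.sint_mul_solidHarmonic_recursion (hz : IsZonal e ν)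
    (hν : ConcentratedOn ν (Metric.sphere 0 1)) (he : ‖e‖ = 1)
    (hp : IsSolidHarmonic (k + 1) p) (hh : Continuous h) :
    (k + 1) * (k + finrank ℝ E - 2) * sint ν (fun x => h ⟪x, e⟫ * p x) =
      (2 * k + finrank ℝ E - 2) * sint ν (fun x => h ⟪x, e⟫ * ⟪x, e⟫ * dirDeriv e p x) -
        sint ν (fun x => h ⟪x, e⟫ * dirDeriv e (dirDeriv e p) x) := by
  have hp0 := hp.contDiff.continuous
  have hp1 := contDiff_dirDeriv hp.contDiff (m := ∞) le_rfl e
  have hp2 := (contDiff_dirDeriv hp1 (m := ∞) le_rfl e).continuous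
  replace hp1 := hp1.continuous
  have hzero := hz.sint_mul_sum_rotDeriv_rotDeriv_eq_zero hν he (stdOrthonormalBasis ℝ E)
    (contDiff_infty.1 hp.contDiff 2) hh
  have hpointwise : ∀ᵐ x ∂ν.variation, _ :=
    (hν.ae_mem Metric.isClosed_sphere.measurableSet).mono fun x hx =>
      congrArg (h ⟪x, e⟫ * ·)
        (hp.sum_rotDeriv_rotDeriv (stdOrthonormalBasis ℝ E) he (by simpa using hx))
  have hexpand : sint ν (fun x => 2 * (2 * k + finrank ℝ E - 2) *
          (h ⟪x, e⟫ * ⟪x, e⟫ * dirDeriv e p x) +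
        (-2 * (h ⟪x, e⟫ * dirDeriv e (dirDeriv e p) x) +
          -2 * ((k + 1) * (k + finrank ℝ E - 2)) * (h ⟪x, e⟫ * p x))) = 0 := by
    rw [← hzero, sint_congr_ae hpointwise]
    congr 1 with x
    ring
  have hint {f : E → ℝ} (hf : Continuous f) : ν.Integrable f :=
    hν.integrable (isCompact_sphere 0 1) hf
  rw [sint_add (hint (by fun_prop)) (hint (by fun_prop)),
    sint_add (hint (by fun_prop)) (hint (by fun_prop)),
    sint_const_mul, sint_const_mul, sint_const_mul] at hexpand
  linarith

lemma IsZonal.sint_mul_solidHarmonic_one (hE : 3 ≤ finrank ℝ E) (hz : IsZonal e ν)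
    (hν : ConcentratedOn ν (Metric.sphere 0 1)) (he : ‖e‖ = 1)
    (hp : IsSolidHarmonic 1 p) (hh : Continuous h) :
    sint ν (fun x => h ⟪x, e⟫ * p x) =
      p e * sint ν (fun x => h ⟪x, e⟫ * legP (finrank ℝ E) 1 ⟪x, e⟫) := by
  have hderiv : dirDeriv e p = fun _ => p e := by
    ext x
    rw [(isSolidHarmonic_dirDeriv hp e).homogeneous.eq_of_degree_zero x e, hp.dirDeriv_self,
      Nat.cast_one, one_mul]
  have hvanish : sint ν (fun x => h ⟪x, e⟫ * dirDeriv e (dirDeriv e p) x) = 0 := by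
    simp [hderiv, dirDeriv, sint]
  have hdim : (finrank ℝ E : ℝ) - 2 ≠ 0 := by
    have : (3 : ℝ) ≤ finrank ℝ E := by exact_mod_cast hE
    linarith
  have hrec := hz.sint_mul_solidHarmonic_recursion hν he hp hh
  rw [hvanish, hderiv] at hrec
  simp only [mul_comm _ (p e), sint_const_mul] at hrec
  push_cast at hrec
  refine mul_left_cancel₀ hdim ?_
  simp only [legP]
  linear_combination hrec

theorem IsZonal.sint_mul_solidHarmonic (hE : 3 ≤ finrank ℝ E) (hz : IsZonal e ν)
    (hν : ConcentratedOn ν (Metric.sphere 0 1)) (he : ‖e‖ = 1) :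
    ∀ {k : ℕ} {p : E → ℝ} {h : ℝ → ℝ}, IsSolidHarmonic k p → Continuous h →
      sint ν (fun x => h ⟪x, e⟫ * p x) =
        p e * sint ν (fun x => h ⟪x, e⟫ * legP (finrank ℝ E) k ⟪x, e⟫)
  | 0, _, h, hp, _ => hp.homogeneous.sint_mul_of_degree_zero _ h e
  | 1, _, _, hp, hh => hz.sint_mul_solidHarmonic_one hE hν he hp hh
  | k + 2, p, h, hp, hh => by
    have hp1 := isSolidHarmonic_dirDeriv hp e
    have hp2 := isSolidHarmonic_dirDeriv hp1 e
    have ih1 := IsZonal.sint_mul_solidHarmonic hE hz hν he hp1 (h := fun t => h t * t) (by fun_prop)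
    have ih2 := IsZonal.sint_mul_solidHarmonic hE hz hν he hp2 hh
    have hrec := hz.sint_mul_solidHarmonic_recursion hν he hp hh
    rw [ih1, ih2, hp1.dirDeriv_self, hp.dirDeriv_self] at hrec
    push_cast at hrec
    have hdim : (k + finrank ℝ E - 1 : ℝ) ≠ 0 := by
      have : (3 : ℝ) ≤ finrank ℝ E := by exact_mod_cast hE
      have : (0 : ℝ) ≤ k := k.cast_nonneg
      linarith
    have hk2 : (k + 2 : ℝ) ≠ 0 := by positivity
    rw [sint_mul_legP_add_two hν _ hh]
    field_simp
    refine mul_left_cancel₀ hk2 ?_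
    linear_combination hrec

theorem funk_hecke_measures_general (hE : 3 ≤ finrank ℝ E) (he : ‖e‖ = 1) {σ τ : SignedMeasure E}
    (hσ : ConcentratedOn σ (Metric.sphere 0 1)) (hν : ConcentratedOn ν (Metric.sphere 0 1))
    (hz : IsZonal e ν) {R : E → E ≃ₗᵢ[ℝ] E} (hR : ∀ v, ‖v‖ = 1 → R v e = v)
    (hτ : ∀ f : E → ℝ, Continuous f → sint τ f = sint σ (fun v => sint ν (fun u => f (R v u))))
    (hp : IsSolidHarmonic k p) :
    sint τ p = sint ν (fun u => legP (finrank ℝ E) k ⟪u, e⟫) * sint σ p := by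
  have hfiber (v : E) (hv : ‖v‖ = 1) : sint ν (fun u => p (R v u)) =
      sint ν (fun u => legP (finrank ℝ E) k ⟪u, e⟫) * p v := by
    have h := hz.sint_mul_solidHarmonic hE hν he (hp.comp_linearIsometryEquiv (R v))
      (continuous_const (y := (1 : ℝ)))
    simpa only [one_mul, Function.comp_apply, hR v hv, mul_comm (p v)] using h
  rw [hτ p hp.contDiff.continuous, ← sint_const_mul]
  exact sint_congr_ae <| (hσ.ae_mem Metric.isClosed_sphere.measurableSet).mono fun v hv =>
    hfiber v (by simpa using hv)

end FunkHecke

lemma laplacian_eq_eLap {n : ℕ} (f : Eucl n → ℝ) : Δ f = eLap n f := by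
  rw [InnerProductSpace.laplacian_eq_iteratedFDeriv_orthonormalBasis f
    (EuclideanSpace.basisFun (Fin n) ℝ)]
  ext x
  simp only [eLap, EuclideanSpace.basisFun_apply, iteratedFDeriv_two_apply, Matrix.cons_val_zero,
    Matrix.cons_val_one]

/-- Funk–Hecke theorem for measures: let `ν` be a finite signed zonal Borel
measure on `S^{n-1}`, identified via cylindrical coordinates with the measure `μt` on
`[-1,1]` (so that testing `ν` on zonal functions is integration against
`ω_{n-1}(1-t²)^{(n-3)/2} dμt`), and let `σ` be a finite signed Borel measure on
`S^{n-1}`. Then the degree-`k` spherical harmonic component of `σ ∗ ν` equals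
`a_k^n[μ] ⋅ π_k σ`, with `a_k^n[μ] = ω_{n-1} ∫ P_k^n(t)(1-t²)^{(n-3)/2} dμt`; i.e.,
tested against any spherical harmonic `p` of degree `k`,
`⟨p, σ ∗ ν⟩ = a_k^n[μ] ⟨p, σ⟩`. The convolution `σ ∗ ν` is the signed measure `τ`
characterized by `∫ h dτ = ∫∫ h(R_v u) dν(u) dσ(v)` for continuous `h`, where
`R_v ∈ SO(n)` is any rotation taking the pole `ē` to `v`. -/
theorem funk_hecke_measures (n : ℕ) (hn : 3 ≤ n) (e : Eucl n) (he : ‖e‖ = 1)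
    (σ ν : SignedMeasure (Eucl n)) (hσs : SphSupported σ) (hνs : SphSupported ν)
    (hzonal : ∀ g : Eucl n ≃ₗᵢ[ℝ] Eucl n,
      g e = e → LinearEquiv.det g.toLinearEquiv = 1 → ν.map g = ν)
    (μt : SignedMeasure ℝ)
    (hμt : ∀ A : Set ℝ, MeasurableSet A → A ⊆ (Set.Icc (-1 : ℝ) 1)ᶜ → μt A = 0)
    (hident : ∀ h : ℝ → ℝ, Continuous h →
      sint ν (fun u => h ⟪u, e⟫)
        = sint μt (fun t => ωS (n - 1) * (1 - t ^ 2) ^ (((n : ℝ) - 3) / 2) * h t))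
    (R : Eucl n → (Eucl n ≃ₗᵢ[ℝ] Eucl n))
    (hR : ∀ v : Eucl n, ‖v‖ = 1 → R v e = v ∧ LinearEquiv.det (R v).toLinearEquiv = 1)
    (τ : SignedMeasure (Eucl n)) (hτs : SphSupported τ)
    (hτ : ∀ h : Eucl n → ℝ, Continuous h →
      sint τ h = sint σ (fun v => sint ν (fun u => h (R v u)))) :
    ∀ (k : ℕ) (p : Eucl n → ℝ), ContDiff ℝ (⊤ : ℕ∞) p →
      (∀ (c : ℝ) (x : Eucl n), p (c • x) = c ^ k * p x) →
      (∀ x : Eucl n, eLap n p x = 0) →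
      sint τ p
        = (ωS (n - 1) *
            sint μt (fun t => legP n k t * (1 - t ^ 2) ^ (((n : ℝ) - 3) / 2))) *
          sint σ p := by
  intro k p hsmooth hhom hlap
  have hp : IsSolidHarmonic k p :=
    ⟨hsmooth, hhom, fun x => (congrFun (laplacian_eq_eLap p) x).trans (hlap x)⟩
  have hmultiplier : sint ν (fun u => legP n k ⟪u, e⟫) =
      ωS (n - 1) * sint μt (fun t => legP n k t * (1 - t ^ 2) ^ (((n : ℝ) - 3) / 2)) := by
    rw [hident _ (continuous_legP n k), ← sint_const_mul]
    congr 1 with t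
    ring
  have hmain := funk_hecke_measures_general (by rwa [finrank_euclideanSpace_fin]) he hσs hνs hzonal
    (fun v hv => (hR v hv).1) hτ hp
  rwa [finrank_euclideanSpace_fin, hmultiplier] at hmain
end
end
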